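/- Let d ≥ 1, T > 0, and let β and b satisfy hypotheses (i)–(ii). Let u0 ∈ L¹(ℝ^d) ∩ L^∞(ℝ^d). If u₁ and u₂ are both distributional solutions of the nonlinear Fokker–Planck equation ∂_t u − Δβ(u) + div(b(x,u)u) = 0 with initial datum u0, and both satisfy u_i ∈ L^∞((0,T); L¹(ℝ^d)) and u_i ∈ L^∞((0,T)×ℝ^d), then u₁(t,x) = u₂(t,x) for every t ∈ [0,T] and a.e. x ∈ ℝ^d. -/

import Mathlib

open MeasureTheory Filter Set

noncomputable section

/-- The Laplacian of a function on `ℝ^d` (sum of second partial derivatives). -/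
noncomputable def lap {d : ℕ} (f : EuclideanSpace ℝ (Fin d) → ℝ)
    (x : EuclideanSpace ℝ (Fin d)) : ℝ :=
  ∑ i, fderiv ℝ (fun y => fderiv ℝ f y (EuclideanSpace.single i 1)) x
    (EuclideanSpace.single i 1)

/-- Hypothesis (i): `β(0) = 0`, `β ∈ C¹(ℝ)`, and strong monotonicity with constant `γ0 > 0`. -/
def HypBeta (β : ℝ → ℝ) (γ0 : ℝ) : Prop :=
  β 0 = 0 ∧ ContDiff ℝ 1 β ∧ 0 < γ0 ∧
    ∀ r1 r2 : ℝ, γ0 * (r1 - r2) ^ 2 ≤ (β r1 - β r2) * (r1 - r2)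

/-- Hypothesis (ii) on the drift `b : ℝ^d × ℝ → ℝ^d`: `b` is `C¹`, bounded, `b(x,0) = 0`,
`∂_r b` is bounded on `ℝ^d × [-M,M]` for every `M > 0`, and
`δ(r) = sup_x |∇_x b(x,r)|` is a bounded continuous function of `r`. -/
def HypB {d : ℕ} (b : EuclideanSpace ℝ (Fin d) → ℝ → EuclideanSpace ℝ (Fin d)) : Prop :=
  ContDiff ℝ 1 (fun p : EuclideanSpace ℝ (Fin d) × ℝ => b p.1 p.2) ∧
  (∃ C, ∀ x r, ‖b x r‖ ≤ C) ∧
  (∀ x, b x 0 = 0) ∧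
  (∀ M > (0 : ℝ), ∃ C, ∀ x r, |r| ≤ M → ‖deriv (fun s => b x s) r‖ ≤ C) ∧
  (∃ δb : ℝ → ℝ, Continuous δb ∧ (∃ C, ∀ r, δb r ≤ C) ∧
    ∀ r, IsLUB (range fun x => ‖fderiv ℝ (fun y => b y r) x‖) (δb r))

/-- `u` is a distributional (Schwartz sense) solution of
`∂_t u − Δβ(u) + div(b(x,u)u) = 0`, `u(0) = u0`:
each `u(t)` is in `L¹`, `t ↦ u(t,x)dx` is narrowly continuous, the weak formulation holds
against all test functions `φ ∈ C_c^∞((0,∞) × ℝ^d)`, and the initial condition holds a.e. -/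
def IsDistSol {d : ℕ} (β : ℝ → ℝ) (b : EuclideanSpace ℝ (Fin d) → ℝ → EuclideanSpace ℝ (Fin d))
    (u0 : EuclideanSpace ℝ (Fin d) → ℝ) (u : ℝ → EuclideanSpace ℝ (Fin d) → ℝ) : Prop :=
  (∀ t, 0 ≤ t → Integrable (u t)) ∧
  (∀ ψ : EuclideanSpace ℝ (Fin d) → ℝ, Continuous ψ → (∃ C, ∀ x, |ψ x| ≤ C) →
    ∀ s, 0 ≤ s →
      Tendsto (fun t => ∫ x, u t x * ψ x) (nhdsWithin s (Ici 0))
        (nhds (∫ x, u s x * ψ x))) ∧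
  (∀ φ : ℝ → EuclideanSpace ℝ (Fin d) → ℝ,
    ContDiff ℝ (⊤ : ℕ∞) (Function.uncurry φ) →
    HasCompactSupport (Function.uncurry φ) →
    (∀ p ∈ tsupport (Function.uncurry φ), 0 < p.1) →
    (∫ t in Ioi (0 : ℝ), ∫ x,
      (u t x * deriv (fun s => φ s x) t
        + β (u t x) * lap (φ t) x
        + u t x * fderiv ℝ (φ t) x (b x (u t x)))) = 0) ∧
  (∀ᵐ x, u 0 x = u0 x)

/-- `u ∈ L^∞((0,T); L¹(ℝ^d))`. -/
def BddL1 {d : ℕ} (T : ℝ) (u : ℝ → EuclideanSpace ℝ (Fin d) → ℝ) : Prop :=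
  ∃ C, ∀ t ∈ Ioo 0 T, (∫ x, |u t x|) ≤ C

/-- `u ∈ L^∞((0,T) × ℝ^d)`. -/
def BddLinfty {d : ℕ} (T : ℝ) (u : ℝ → EuclideanSpace ℝ (Fin d) → ℝ) : Prop :=
  ∃ C, ∀ᵐ p ∂((volume.restrict (Ioo 0 T)).prod
      (volume : Measure (EuclideanSpace ℝ (Fin d)))), |u p.1 p.2| ≤ C

/-!
The difference `z = u₁ - u₂` of two bounded solutions solves the linear problem
`∂_t z = Δw - div g`, `z(0) = 0`, with `w = β(u₁) - β(u₂)` and `g = u₁ b(x, u₁) - u₂ b(x, u₂)`.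
Testing it with plane waves gives, for every frequency `ξ`, an ordinary differential equation for
the Fourier transform `ẑ(t, ξ)`. Multiplying by `(1 + |2πξ|²)⁻¹ ẑ` and integrating in `ξ` yields
the energy identity in `H⁻¹`, whose leading term is `-2 ∫ z w ≤ -2γ ∫ z²` by strong monotonicity
of `β`. As `u₁` and `u₂` are bounded, `|w|` and `|g|` are at most `L |z|`, so Young's inequality
absorbs all other terms except a multiple of the energy itself, and Grönwall's inequality gives
`z = 0`.

A solution is only assumed measurable in `x` for each `t`. Narrow continuity in `t` provides a
jointly measurable representative, the limit of mollifications in `x`.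
-/

open Function Real
open scoped FourierTransform RealInnerProductSpace ContDiff NNReal Topology

/-! ### Test functions and weak derivatives on an interval -/

/-- `φ` is a smooth function whose support is compact and contained in `Ω`: the class
`C_c^∞(Ω)`, for functions defined on the whole space. -/
structure IsTestFunctionOn {E : Type*} [NormedAddCommGroup E] [NormedSpace ℝ E] (Ω : Set E)
    (φ : E → ℝ) : Prop where
  contDiff : ContDiff ℝ ∞ φ
  hasCompactSupport : HasCompactSupport φ
  tsupport_subset : tsupport φ ⊆ Ω

namespace IsTestFunctionOn

variable {E : Type*} [NormedAddCommGroup E] [NormedSpace ℝ E] {Ω : Set E} {φ ψ : E → ℝ}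

lemma apply_eq_zero (hφ : IsTestFunctionOn Ω φ) {x : E} (hx : x ∉ Ω) : φ x = 0 :=
  image_eq_zero_of_notMem_tsupport fun h => hx (hφ.tsupport_subset h)

lemma sub_const_mul (hφ : IsTestFunctionOn Ω φ) (hψ : IsTestFunctionOn Ω ψ) (c : ℝ) :
    IsTestFunctionOn Ω fun x => φ x - c * ψ x where
  contDiff := hφ.contDiff.sub (contDiff_const.mul hψ.contDiff)
  hasCompactSupport := hφ.hasCompactSupport.sub hψ.hasCompactSupport.mul_left
  tsupport_subset := (tsupport_sub _ _).trans
    (union_subset hφ.tsupport_subset (tsupport_mul_subset_right.trans hψ.tsupport_subset))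

lemma sum {ι : Type*} {φ : ι → E → ℝ} (s : Finset ι) (hφ : ∀ i ∈ s, IsTestFunctionOn Ω (φ i)) :
    IsTestFunctionOn Ω fun x => ∑ i ∈ s, φ i x := by
  simp only [← Finset.sum_apply]
  refine Finset.sum_induction φ (IsTestFunctionOn Ω) (fun φ ψ hφ hψ => ?_) ?_ hφ
  · exact ⟨hφ.contDiff.add hψ.contDiff, hφ.hasCompactSupport.add hψ.hasCompactSupport,
      (tsupport_add φ ψ).trans (union_subset hφ.tsupport_subset hψ.tsupport_subset)⟩
  · exact ⟨contDiff_const, .zero, by simp [tsupport]⟩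

lemma fderiv_apply_const (hφ : IsTestFunctionOn Ω φ) (v : E) :
    IsTestFunctionOn Ω fun x => fderiv ℝ φ x v where
  contDiff := (hφ.contDiff.fderiv_right (m := ∞) (by simp)).clm_apply contDiff_const
  hasCompactSupport := hφ.hasCompactSupport.fderiv_apply (𝕜 := ℝ) v
  tsupport_subset := (tsupport_fderiv_apply_subset ℝ v).trans hφ.tsupport_subset

variable [MeasurableSpace E] {μ : Measure E}

lemma setIntegral_mul (hφ : IsTestFunctionOn Ω φ) (F : E → ℝ) :
    ∫ x in Ω, φ x * F x ∂μ = ∫ x, φ x * F x ∂μ :=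
  setIntegral_eq_integral_of_forall_compl_eq_zero fun x hx => by
    rw [hφ.apply_eq_zero hx, zero_mul]

variable [BorelSpace E]

lemma integrable [IsFiniteMeasureOnCompacts μ] (hφ : IsTestFunctionOn Ω φ) : Integrable φ μ :=
  hφ.contDiff.continuous.integrable_of_hasCompactSupport hφ.hasCompactSupport

lemma integrable_mul (hφ : IsTestFunctionOn Ω φ) {F : E → ℝ} (hF : Integrable F μ) :
    Integrable (fun x => φ x * F x) μ := by
  obtain ⟨C, hC⟩ := hφ.hasCompactSupport.exists_bound_of_continuous hφ.contDiff.continuous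
  exact hF.bdd_mul hφ.contDiff.continuous.aestronglyMeasurable (.of_forall hC)

end IsTestFunctionOn

section Interval

variable {a b : ℝ}

lemma exists_isTestFunctionOn_Ioo_integral_eq_one (hab : a < b) :
    ∃ ρ : ℝ → ℝ, IsTestFunctionOn (Ioo a b) ρ ∧ ∫ t, ρ t = 1 := by
  let bump : ContDiffBump ((a + b) / 2) :=
    ⟨(b - a) / 8, (b - a) / 4, by linarith, by linarith⟩
  refine ⟨bump.normed volume,
    ⟨bump.contDiff_normed, bump.hasCompactSupport_normed, ?_⟩, bump.integral_normed⟩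
  rw [bump.tsupport_normed_eq, closedBall_eq_Icc]
  have hrOut : bump.rOut = (b - a) / 4 := rfl
  exact Icc_subset_Ioo (by linarith) (by linarith)

lemma exists_subset_Icc_of_isCompact_of_subset_Ioo {K : Set ℝ} (hK : IsCompact K)
    (hKab : K ⊆ Ioo a b) : ∃ c d, a < c ∧ d < b ∧ K ⊆ Icc c d := by
  rcases K.eq_empty_or_nonempty with rfl | hne
  · exact ⟨a + 1, b - 1, by linarith, by linarith, empty_subset _⟩
  · exact ⟨sInf K, sSup K, (hKab (hK.sInf_mem hne)).1, (hKab (hK.sSup_mem hne)).2,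
      fun x hx => ⟨csInf_le hK.bddBelow hx, le_csSup hK.bddAbove hx⟩⟩

lemma IsTestFunctionOn.exists_primitive {k : ℝ → ℝ} (hk : IsTestFunctionOn (Ioo a b) k)
    (hk0 : ∫ t, k t = 0) : ∃ θ, IsTestFunctionOn (Ioo a b) θ ∧ deriv θ = k := by
  obtain ⟨c, d, hac, hdb, hcd⟩ :=
    exists_subset_Icc_of_isCompact_of_subset_Ioo hk.hasCompactSupport hk.tsupport_subset
  have hzero : ∀ s ∉ Icc c d, k s = 0 := fun s hs =>
    image_eq_zero_of_notMem_tsupport fun h => hs (hcd h)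
  let θ : ℝ → ℝ := fun t => ∫ s in Iic t, k s
  have hint : Integrable k := hk.integrable
  have hderiv : ∀ t, HasDerivAt θ (k t) t := fun t => by
    have hθ : θ = fun t => (∫ s in Iic 0, k s) + ∫ s in (0 : ℝ)..t, k s := funext fun t => by
      rw [← intervalIntegral.integral_Iic_sub_Iic hint.integrableOn hint.integrableOn]
      exact (add_sub_cancel _ _).symm
    rw [hθ]
    exact (hk.contDiff.continuous.integral_hasStrictDerivAt 0 t).hasDerivAt.const_add _
  have hsupp : tsupport θ ⊆ Icc c d := by
    refine closure_minimal (fun t ht => ?_) isClosed_Icc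
    by_contra hcd'
    refine ht ?_
    rcases not_and_or.1 hcd' with htc | htd
    · exact setIntegral_eq_zero_of_forall_eq_zero fun s hs =>
        hzero s fun h => htc (h.1.trans hs)
    · refine Eq.trans ?_ hk0
      exact setIntegral_eq_integral_of_forall_compl_eq_zero fun s hs =>
        hzero s fun h => hs (h.2.trans (not_le.1 htd).le)
  have hderiv' : deriv θ = k := funext fun t => (hderiv t).deriv
  refine ⟨θ, ⟨?_, isCompact_Icc.of_isClosed_subset (isClosed_tsupport _) hsupp,
    hsupp.trans (Icc_subset_Ioo hac hdb)⟩, hderiv'⟩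
  exact contDiff_infty_iff_deriv.2 ⟨fun t => (hderiv t).differentiableAt, hderiv' ▸ hk.contDiff⟩

-- du Bois-Reymond: a test function `g` minus `(∫ g) ρ`, where `∫ ρ = 1`, is a derivative.
lemma exists_ae_eq_const_of_integral_deriv_mul_eq_zero (hab : a < b) {F : ℝ → ℝ}
    (hF : IntegrableOn F (Ioo a b))
    (h : ∀ θ, IsTestFunctionOn (Ioo a b) θ → ∫ t in Ioo a b, deriv θ t * F t = 0) :
    ∃ c, ∀ᵐ t, t ∈ Ioo a b → F t = c := by
  obtain ⟨ρ, hρ, hρ1⟩ := exists_isTestFunctionOn_Ioo_integral_eq_one hab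
  set c := ∫ t in Ioo a b, ρ t * F t with hc
  suffices ∀ᵐ t, t ∈ Ioo a b → F t - c = 0 from
    ⟨c, this.mono fun t ht htab => sub_eq_zero.1 (ht htab)⟩
  have hconst : IntegrableOn (fun _ : ℝ => c) (Ioo a b) := integrableOn_const (by simp)
  refine isOpen_Ioo.ae_eq_zero_of_integral_contDiff_smul_eq_zero
    (hF.sub hconst).locallyIntegrableOn fun g hg hgc hgs => ?_
  have hg' : IsTestFunctionOn (Ioo a b) g := ⟨hg, hgc, hgs⟩
  obtain ⟨θ, hθ, hθ'⟩ := (hg'.sub_const_mul hρ (∫ t, g t)).exists_primitive (by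
    rw [integral_sub hg'.integrable (hρ.integrable.const_mul _), integral_const_mul, hρ1,
      mul_one, sub_self])
  have hθF := h θ hθ
  simp only [hθ', sub_mul, mul_assoc] at hθF
  rw [integral_sub (hg'.integrable_mul hF) ((hρ.integrable_mul hF).const_mul _),
    integral_const_mul, ← hc] at hθF
  simp only [smul_eq_mul]
  rw [← hg'.setIntegral_mul]
  simp only [mul_sub]
  rw [integral_sub (hg'.integrable_mul hF) (hg'.integrable_mul hconst),
    hg'.setIntegral_mul (fun _ => c), integral_mul_const, hθF]

lemma integral_deriv_mul_primitive_add {G h : ℝ → ℝ} (hG : AbsolutelyContinuousOnInterval G a b)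
    (hh : IntervalIntegrable h volume a b) :
    ∫ t in a..b, (deriv G t * (∫ s in a..t, h s) + G t * h t) = G b * ∫ s in a..b, h s := by
  have hparts := hG.integral_deriv_mul_eq_sub
    (hh.absolutelyContinuousOnInterval_intervalIntegral left_mem_uIcc)
  rw [intervalIntegral.integral_same, mul_zero, sub_zero] at hparts
  rw [← hparts]
  refine intervalIntegral.integral_congr_ae ?_
  filter_upwards [hh.ae_hasDerivAt_integral] with t ht htab
  rw [(ht (uIoc_subset_uIcc htab) a left_mem_uIcc).deriv]

lemma integral_deriv_mul_sub_primitive_eq_zero (hab : a < b) {f h θ : ℝ → ℝ}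
    (hf : ContinuousOn f (Icc a b)) (hh : IntervalIntegrable h volume a b)
    (hθ : IsTestFunctionOn (Ioo a b) θ)
    (hfh : ∫ t in Ioo a b, (deriv θ t * f t + θ t * h t) = 0) :
    ∫ t in Ioo a b, deriv θ t * (f t - ∫ s in a..t, h s) = 0 := by
  have hθ1 : ContDiff ℝ 1 θ := hθ.contDiff.of_le (by simp)
  have hparts := integral_deriv_mul_primitive_add
    (hθ1.contDiffOn.absolutelyContinuousOnInterval (a := a) (b := b)) hh
  rw [hθ.apply_eq_zero fun h => lt_irrefl _ h.2, zero_mul] at hparts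
  have hprim := intervalIntegral.continuousOn_primitive_interval' hh left_mem_uIcc
  rw [← uIcc_of_le hab.le] at hf
  have hdθ : ContinuousOn (deriv θ) (uIcc a b) := (hθ1.continuous_deriv le_rfl).continuousOn
  have hif := (hdθ.fun_mul hf).intervalIntegrable (μ := volume)
  have hiprim := (hdθ.fun_mul hprim).intervalIntegrable (μ := volume)
  have hih := hh.continuousOn_mul hθ1.continuous.continuousOn
  rw [← integral_Ioc_eq_integral_Ioo, ← intervalIntegral.integral_of_le hab.le] at hfh ⊢
  rw [intervalIntegral.integral_add hif hih] at hfh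
  rw [intervalIntegral.integral_add hiprim hih] at hparts
  simp only [mul_sub]
  rw [intervalIntegral.integral_sub hif hiprim]
  linarith

lemma eq_add_integral_of_forall_integral_deriv_mul_add_eq_zero (hab : a < b) {f h : ℝ → ℝ}
    (hf : ContinuousOn f (Icc a b)) (hh : IntervalIntegrable h volume a b)
    (hfh : ∀ θ, IsTestFunctionOn (Ioo a b) θ →
      ∫ t in Ioo a b, (deriv θ t * f t + θ t * h t) = 0) {t : ℝ} (ht : t ∈ Icc a b) :
    f t = f a + ∫ s in a..t, h s := by
  let F : ℝ → ℝ := fun t => f t - ∫ s in a..t, h s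
  have hF : ContinuousOn F (Icc a b) := by
    have := intervalIntegral.continuousOn_primitive_interval' hh left_mem_uIcc
    rw [uIcc_of_le hab.le] at this
    exact hf.sub this
  obtain ⟨c, hc⟩ := exists_ae_eq_const_of_integral_deriv_mul_eq_zero hab
    (hF.integrableOn_Icc.mono_set Ioo_subset_Icc_self)
    fun θ hθ => integral_deriv_mul_sub_primitive_eq_zero hab hf hh hθ (hfh θ hθ)
  have hFc : EqOn F (fun _ => c) (Icc a b) :=
    (Measure.eqOn_open_of_ae_eq (μ := volume) ((ae_restrict_iff' measurableSet_Ioo).2 hc)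
      isOpen_Ioo (hF.mono Ioo_subset_Icc_self) continuousOn_const).of_subset_closure hF
      continuousOn_const Ioo_subset_Icc_self (closure_Ioo hab.ne).ge
  have hFt : F t = F a := (hFc ht).trans (hFc (left_mem_Icc.2 hab.le)).symm
  simp only [F, intervalIntegral.integral_same, sub_zero] at hFt
  linarith

lemma sq_eq_integral_of_eq_integral {f h : ℝ → ℝ} (hh : IntervalIntegrable h volume a b)
    (hf : ∀ t ∈ Icc a b, f t = ∫ s in a..t, h s) {t : ℝ} (ht : t ∈ Icc a b) :
    f t ^ 2 = ∫ s in a..t, 2 * (f s * h s) := by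
  have hht : IntervalIntegrable h volume a t :=
    hh.mono_set (uIcc_subset_uIcc_left (Icc_subset_uIcc ht))
  have hG := hht.absolutelyContinuousOnInterval_intervalIntegral left_mem_uIcc
  rw [sq, hf t ht, ← integral_deriv_mul_primitive_add hG hht]
  refine intervalIntegral.integral_congr_ae ?_
  filter_upwards [hht.ae_hasDerivAt_integral] with s hs hst
  rw [(hs (uIoc_subset_uIcc hst) a left_mem_uIcc).deriv]
  rw [uIoc_of_le ht.1] at hst
  rw [hf s ⟨hst.1.le, hst.2.trans ht.2⟩]
  ring

lemma intervalIntegrable_inner_of_continuousOn {E : Type*} [NormedAddCommGroup E]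
    [InnerProductSpace ℝ E] {f h : ℝ → E} (hf : ContinuousOn f (uIcc a b))
    (hh : IntervalIntegrable h volume a b) :
    IntervalIntegrable (fun s => ⟪f s, h s⟫) volume a b := by
  obtain ⟨C, hC⟩ := isCompact_uIcc.exists_bound_of_continuousOn hf
  refine (hh.norm.const_mul C).mono_fun' (((hf.mono uIoc_subset_uIcc).aestronglyMeasurable
    measurableSet_uIoc).inner hh.def'.aestronglyMeasurable)
    ((ae_restrict_mem measurableSet_uIoc).mono fun s hs => ?_)
  exact (norm_inner_le_norm _ _).trans
    (mul_le_mul_of_nonneg_right (hC s (uIoc_subset_uIcc hs)) (norm_nonneg _))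

lemma norm_sq_eq_integral_of_eq_integral {f h : ℝ → ℂ} (hh : IntervalIntegrable h volume a b)
    (hf : ∀ t ∈ Icc a b, f t = ∫ s in a..t, h s) {t : ℝ} (ht : t ∈ Icc a b) :
    ‖f t‖ ^ 2 = ∫ s in a..t, 2 * ⟪f s, h s⟫ := by
  have hsub : ∀ s ∈ Icc a b, IntervalIntegrable h volume a s := fun s hs =>
    hh.mono_set (uIcc_subset_uIcc_left (Icc_subset_uIcc hs))
  have hclm (ℓ : ℂ →L[ℝ] ℝ) : ∀ s ∈ Icc a b, ℓ (f s) = ∫ r in a..s, ℓ (h r) := fun s hs => by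
    rw [hf s hs, ℓ.intervalIntegral_comp_comm (hsub s hs)]
  have hcont : ContinuousOn f (uIcc a t) := by
    have hprim := intervalIntegral.continuousOn_primitive_interval' (hsub t ht) left_mem_uIcc
    rw [uIcc_of_le ht.1] at hprim ⊢
    exact hprim.congr fun s hs => hf s ⟨hs.1, hs.2.trans ht.2⟩
  have hhclm (ℓ : ℂ →L[ℝ] ℝ) {s : ℝ} (hs : IntervalIntegrable h volume a s) :
      IntervalIntegrable (fun r => ℓ (h r)) volume a s :=
    ⟨ℓ.integrable_comp hs.1, ℓ.integrable_comp hs.2⟩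
  have hint (ℓ : ℂ →L[ℝ] ℝ) :
      IntervalIntegrable (fun s => 2 * (ℓ (f s) * ℓ (h s))) volume a t :=
    ((hhclm ℓ (hsub t ht)).continuousOn_mul (ℓ.continuous.comp_continuousOn hcont)).const_mul 2
  rw [Complex.sq_norm, Complex.normSq_apply, ← sq, ← sq]
  have hre := sq_eq_integral_of_eq_integral (hhclm _ hh) (hclm Complex.reCLM) ht
  have him := sq_eq_integral_of_eq_integral (hhclm _ hh) (hclm Complex.imCLM) ht
  simp only [Complex.reCLM_apply, Complex.imCLM_apply] at hre him
  rw [hre, him]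
  refine (intervalIntegral.integral_add (hint Complex.reCLM) (hint Complex.imCLM)).symm.trans ?_
  congr 1 with s
  simp only [Complex.inner, Complex.reCLM_apply, Complex.imCLM_apply, Complex.mul_re,
    Complex.conj_re, Complex.conj_im]
  ring

lemma hasDerivWithinAt_Ici_integral_of_continuousOn {G : ℝ → ℝ} (hG : ContinuousOn G (uIcc a b))
    {t : ℝ} (ht : t ∈ Ico a b) :
    HasDerivWithinAt (fun t => ∫ s in a..t, G s) (G t) (Ici t) t := by
  have hab : a ≤ b := ht.1.trans ht.2.le
  have hnhds : uIcc a b ∈ 𝓝[>] t := by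
    rw [uIcc_of_le hab]
    exact mem_of_superset (Ioc_mem_nhdsGT ht.2) fun s hs => ⟨ht.1.trans hs.1.le, hs.2⟩
  have htab : t ∈ uIcc a b := Icc_subset_uIcc (Ico_subset_Icc_self ht)
  exact intervalIntegral.integral_hasDerivWithinAt_right
    (hG.mono (uIcc_subset_uIcc_left htab)).intervalIntegrable
    ⟨_, hnhds, hG.aestronglyMeasurable measurableSet_uIcc⟩
    ((hG t htab).mono_of_mem_nhdsWithin hnhds)

-- Grönwall's inequality, applied to the primitive `∫ s in a..t, G s` of `G t = ∫ s in a..t, E s`.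
lemma ae_nonpos_of_ae_le_mul_integral {E : ℝ → ℝ} {c : ℝ} (hE : IntervalIntegrable E volume a b)
    (hE0 : ∀ t, 0 ≤ E t) (hEc : ∀ᵐ t, t ∈ Ioo a b → E t ≤ c * ∫ s in a..t, E s) :
    ∀ᵐ t, t ∈ Ioo a b → E t ≤ 0 := by
  rcases le_or_gt b a with hba | hab
  · exact .of_forall fun t ht => absurd (ht.1.trans ht.2) hba.not_gt
  let G : ℝ → ℝ := fun t => ∫ s in a..t, E s
  have hGcont : ContinuousOn G (uIcc a b) :=
    intervalIntegral.continuousOn_primitive_interval' hE left_mem_uIcc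
  have hHcont : ContinuousOn (fun t => ∫ s in a..t, G s) (uIcc a b) :=
    intervalIntegral.continuousOn_primitive_interval' hGcont.intervalIntegrable left_mem_uIcc
  rw [uIcc_of_le hab.le] at hHcont
  have hsub : ∀ t ∈ Ico a b, uIcc a t ⊆ uIcc a b := fun t ht =>
    uIcc_subset_uIcc_left (Icc_subset_uIcc (Ico_subset_Icc_self ht))
  have hG0 : ∀ t ∈ Ico a b, 0 ≤ G t := fun t ht =>
    intervalIntegral.integral_nonneg ht.1 fun s _ => hE0 s
  have hGle : ∀ t ∈ Ico a b, G t ≤ c * ∫ s in a..t, G s := fun t ht => by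
    rw [← intervalIntegral.integral_const_mul]
    refine intervalIntegral.integral_mono_ae_restrict ht.1 (hE.mono_set (hsub t ht))
      ((hGcont.mono (hsub t ht)).intervalIntegrable.const_mul c) ?_
    rw [EventuallyLE, ← restrict_Ioo_eq_restrict_Icc, ae_restrict_iff' measurableSet_Ioo]
    filter_upwards [hEc] with s hs hst using hs ⟨hst.1, hst.2.trans ht.2⟩
  have hH0 : ∀ t ∈ Icc a b, ∫ s in a..t, G s = 0 := by
    refine eq_zero_of_abs_deriv_le_mul_abs_self_of_eq_zero_right (f' := G) (K := c) hHcont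
      (fun t ht => hasDerivWithinAt_Ici_integral_of_continuousOn hGcont ht)
      (intervalIntegral.integral_same ..) fun t ht => ?_
    have hH : 0 ≤ ∫ s in a..t, G s := intervalIntegral.integral_nonneg ht.1 fun s hs =>
      hG0 s ⟨hs.1, hs.2.trans_lt ht.2⟩
    rw [Real.norm_of_nonneg (hG0 t ht), Real.norm_of_nonneg hH]
    exact hGle t ht
  filter_upwards [hEc] with t htc ht
  have ht' := Ioo_subset_Ico_self ht
  have hGt : G t = 0 := le_antisymm (by
    simpa only [hH0 t (Ico_subset_Icc_self ht'), mul_zero] using hGle t ht') (hG0 t ht')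
  simpa only [G, hGt, mul_zero] using htc ht

end Interval

/-! ### The Fourier transform on `L¹ ∩ L²` -/

lemma ae_memLp_two_of_memLp_two_prod {α β F : Type*} [MeasurableSpace α] [MeasurableSpace β]
    [NormedAddCommGroup F] {μ : Measure α} {ν : Measure β} [SFinite μ] [SFinite ν] {k : α → β → F}
    (hk : MemLp (uncurry k) 2 (μ.prod ν)) : ∀ᵐ t ∂μ, MemLp (k t) 2 ν := by
  filter_upwards [hk.aestronglyMeasurable.prodMk_left,
    ((memLp_two_iff_integrable_sq_norm hk.aestronglyMeasurable).1 hk).prod_right_ae] with t htm ht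
  exact (memLp_two_iff_integrable_sq_norm htm).2 ht

section Fourier

variable {V : Type*} [NormedAddCommGroup V] [InnerProductSpace ℝ V] [FiniteDimensional ℝ V]
  [MeasurableSpace V] [BorelSpace V]
  {H : Type*} [NormedAddCommGroup H] [InnerProductSpace ℂ H]

lemma continuous_fourier_of_integrable {f : V → H} (hf : Integrable f) : Continuous (𝓕 f) :=
  VectorFourier.fourierIntegral_continuous continuous_fourierChar continuous_inner hf

variable {α : Type*} [MeasurableSpace α] {μ : Measure α} [SFinite μ] {k : α → V → H}

lemma aestronglyMeasurable_uncurry_fourier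
    (hk : AEStronglyMeasurable (uncurry k) (μ.prod volume)) :
    AEStronglyMeasurable (uncurry fun t => 𝓕 (k t)) (μ.prod volume) := by
  have hproj : Measure.QuasiMeasurePreserving (fun p : (α × V) × V => (p.1.1, p.2))
      ((μ.prod volume).prod volume) (μ.prod volume) :=
    QuasiMeasurePreserving.prodMap Measure.quasiMeasurePreserving_fst (.id _)
  have hchar : Continuous fun q : V × V => fourierChar (-⟪q.2, q.1⟫) := by fun_prop
  have hintegrand : AEStronglyMeasurable
      (fun p : (α × V) × V => fourierChar (-⟪p.2, p.1.2⟫) • k p.1.1 p.2)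
      ((μ.prod volume).prod volume) :=
    (hchar.comp_stronglyMeasurable
      (by fun_prop : Measurable fun p : (α × V) × V => (p.1.2, p.2)).stronglyMeasurable
      ).aestronglyMeasurable.smul (hk.comp_quasiMeasurePreserving hproj)
  refine hintegrand.integral_prod_right'.congr (.of_forall fun p => ?_)
  exact (fourier_eq (k p.1) p.2).symm

variable [CompleteSpace H]

lemma integral_smul_fourier_eq {f : V → H} (hf : Integrable f) (g : SchwartzMap V ℂ) :
    ∫ ξ, g ξ • 𝓕 f ξ = ∫ x, 𝓕 (g : V → ℂ) x • f x := by
  have h := VectorFourier.integral_fourierIntegral_smul_eq_flip (μ := volume) (ν := volume)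
    (L := innerₗ V) (f := g) (g := f) continuous_fourierChar continuous_inner g.integrable hf
  rw [flip_innerₗ] at h
  exact h.symm

lemma fourier_toLp_ae_eq {f : V → H} (hf : Integrable f) (hf2 : MemLp f 2) :
    (𝓕 (hf2.toLp f) : Lp (α := V) H 2) =ᵐ[volume] 𝓕 f := by
  refine ae_eq_of_integral_contDiff_smul_eq
    ((Lp.memLp (𝓕 (hf2.toLp f))).locallyIntegrable one_le_two)
    (continuous_fourier_of_integrable hf).locallyIntegrable fun g hg hgc => ?_
  have hgc' : HasCompactSupport (Complex.ofRealCLM ∘ g) := hgc.comp_left rfl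
  let G : SchwartzMap V ℂ := hgc'.toSchwartzMap (Complex.ofRealCLM.contDiff.comp hg)
  have hG (h : V → H) (x : V) : g x • h x = G x • h x := (Complex.coe_smul (g x) (h x)).symm
  have hLp := congrArg (fun D => D G) (Lp.fourier_toTemperedDistribution_eq (hf2.toLp f))
  simp only [TemperedDistribution.fourier_apply, Lp.toTemperedDistribution_apply] at hLp
  simp only [hG]
  rw [← hLp, integral_smul_fourier_eq hf G]
  refine integral_congr_ae ?_
  filter_upwards [hf2.coeFn_toLp] with x hx
  rw [hx, SchwartzMap.fourier_coe]

lemma memLp_two_fourier {f : V → H} (hf : Integrable f) (hf2 : MemLp f 2) : MemLp (𝓕 f) 2 :=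
  (Lp.memLp (𝓕 (hf2.toLp f))).ae_eq (fourier_toLp_ae_eq hf hf2)

lemma integral_inner_fourier_eq {f g : V → H} (hf : Integrable f) (hf2 : MemLp f 2)
    (hg : Integrable g) (hg2 : MemLp g 2) :
    ∫ ξ, inner ℂ (𝓕 f ξ) (𝓕 g ξ) = ∫ x, inner ℂ (f x) (g x) := by
  have h := Lp.inner_fourier_eq (hf2.toLp f) (hg2.toLp g)
  rw [L2.inner_def, L2.inner_def] at h
  calc ∫ ξ, inner ℂ (𝓕 f ξ) (𝓕 g ξ)
      = ∫ ξ, inner ℂ (𝓕 (hf2.toLp f) ξ) (𝓕 (hg2.toLp g) ξ) := by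
        refine integral_congr_ae ?_
        filter_upwards [fourier_toLp_ae_eq hf hf2, fourier_toLp_ae_eq hg hg2] with ξ hfξ hgξ
        rw [hfξ, hgξ]
    _ = ∫ x, inner ℂ (hf2.toLp f x) (hg2.toLp g x) := h
    _ = ∫ x, inner ℂ (f x) (g x) := by
        refine integral_congr_ae ?_
        filter_upwards [hf2.coeFn_toLp, hg2.coeFn_toLp] with x hfx hgx
        rw [hfx, hgx]

lemma integral_norm_sq_fourier_eq {f : V → H} (hf : Integrable f) (hf2 : MemLp f 2) :
    ∫ ξ, ‖𝓕 f ξ‖ ^ 2 = ∫ x, ‖f x‖ ^ 2 := by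
  have h := integral_inner_fourier_eq hf hf2 hf hf2
  simp only [inner_self_eq_norm_sq_to_K, ← Complex.ofReal_pow, Complex.coe_algebraMap] at h
  exact_mod_cast h

lemma memLp_two_uncurry_fourier (hk : ∀ᵐ t ∂μ, Integrable (k t))
    (hk2 : MemLp (uncurry k) 2 (μ.prod volume)) :
    MemLp (uncurry fun t => 𝓕 (k t)) 2 (μ.prod volume) := by
  have hmeas := aestronglyMeasurable_uncurry_fourier hk2.aestronglyMeasurable
  rw [memLp_two_iff_integrable_sq_norm hmeas, integrable_prod_iff (hmeas.norm.fun_pow 2)]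
  have hslice := hk.and (ae_memLp_two_of_memLp_two_prod hk2)
  constructor
  · filter_upwards [hslice] with t ht
    exact (memLp_two_fourier ht.1 ht.2).integrable_norm_pow two_ne_zero
  · have hk2' := ((memLp_two_iff_integrable_sq_norm hk2.aestronglyMeasurable).1 hk2
      ).integral_prod_left
    refine hk2'.congr ?_
    filter_upwards [hslice] with t ht
    simp only [norm_pow, norm_norm]
    exact (integral_norm_sq_fourier_eq ht.1 ht.2).symm

end Fourier

section PlaneWave

variable {V : Type*} [NormedAddCommGroup V] [InnerProductSpace ℝ V]

/-- The real plane wave of frequency `ξ` and phase `a`, normalised so that phases `0` and `π / 2`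
are the real and imaginary parts of the kernel `exp (-2πi⟪x, ξ⟫)` of the Fourier transform. -/
def planeWave (a : ℝ) (ξ x : V) : ℝ := cos (2 * π * ⟪x, ξ⟫ + a)

lemma contDiff_planeWave (a : ℝ) (ξ : V) : ContDiff ℝ ∞ (planeWave a ξ) :=
  Real.contDiff_cos.comp
    ((contDiff_const.mul (contDiff_id.inner ℝ contDiff_const)).add contDiff_const)

lemma abs_planeWave_le_one (a : ℝ) (ξ x : V) : |planeWave a ξ x| ≤ 1 := abs_cos_le_one _

lemma planeWave_add_pi (a : ℝ) (ξ x : V) : planeWave (a + π) ξ x = -planeWave a ξ x := by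
  rw [planeWave, ← add_assoc, cos_add_pi, planeWave]

lemma fderiv_planeWave_apply (a : ℝ) (ξ x v : V) :
    fderiv ℝ (planeWave a ξ) x v = 2 * π * ⟪v, ξ⟫ * planeWave (a + π / 2) ξ x := by
  have hinner : HasFDerivAt (fun y : V => ⟪y, ξ⟫) (innerSL ℝ ξ) x :=
    ((innerSL ℝ ξ).hasFDerivAt (x := x)).congr_of_eventuallyEq
      (.of_forall fun y => by rw [innerSL_apply_apply, real_inner_comm])
  have hwave : HasFDerivAt (planeWave a ξ) _ x := ((hinner.const_mul (2 * π)).add_const a).cos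
  rw [hwave.fderiv, planeWave, ← add_assoc, cos_add_pi_div_two]
  simp only [_root_.smul_apply, innerSL_apply_apply, smul_eq_mul, real_inner_comm]
  ring

variable [FiniteDimensional ℝ V] [MeasurableSpace V] [BorelSpace V]

lemma integrable_mul_planeWave {f : V → ℝ} (hf : Integrable f) (a : ℝ) (ξ : V) :
    Integrable fun x => f x * planeWave a ξ x :=
  hf.mul_bdd (contDiff_planeWave a ξ).continuous.aestronglyMeasurable
    (.of_forall (abs_planeWave_le_one a ξ))

/-- The Fourier transform of a real-valued function. -/
def realFourier (f : V → ℝ) (ξ : V) : ℂ := 𝓕 (fun x => (f x : ℂ)) ξ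

lemma realFourier_eq_integral_mul_planeWave {f : V → ℝ} (hf : Integrable f) (ξ : V) :
    realFourier f ξ = (∫ x, f x * planeWave 0 ξ x : ℝ)
      + (∫ x, f x * planeWave (π / 2) ξ x : ℝ) * Complex.I := by
  rw [realFourier, fourier_eq, ← integral_complex_ofReal, ← integral_complex_ofReal,
    ← integral_mul_const, ← integral_add (integrable_mul_planeWave hf 0 ξ).ofReal
      ((integrable_mul_planeWave hf (π / 2) ξ).ofReal.mul_const _)]
  congr 1 with x
  rw [Circle.smul_def, fourierChar_apply, smul_eq_mul, Complex.exp_mul_I, planeWave, planeWave,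
    cos_add_pi_div_two]
  push_cast
  simp only [mul_neg, Complex.cos_neg, Complex.sin_neg, add_zero]
  ring

end PlaneWave

/-! ### The Laplacian and cut-off functions -/

section Laplacian

variable {d : ℕ} {f g : EuclideanSpace ℝ (Fin d) → ℝ}

lemma contDiff_fderiv_apply_const {n : WithTop ℕ∞} (hf : ContDiff ℝ (n + 1) f)
    (v : EuclideanSpace ℝ (Fin d)) : ContDiff ℝ n fun y => fderiv ℝ f y v :=
  (hf.fderiv_right le_rfl).clm_apply contDiff_const

lemma continuous_lap (hf : ContDiff ℝ 2 f) : Continuous (lap f) :=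
  continuous_finsetSum _ fun _ _ =>
    (contDiff_fderiv_apply_const (n := 0) (contDiff_fderiv_apply_const (n := 1) hf _) _).continuous

lemma lap_eq_of_eventuallyEq {x : EuclideanSpace ℝ (Fin d)} (h : f =ᶠ[𝓝 x] g) :
    lap f x = lap g x :=
  Finset.sum_congr rfl fun i _ => by
    have hi : (fun y => fderiv ℝ f y (EuclideanSpace.single i 1)) =ᶠ[𝓝 x]
        fun y => fderiv ℝ g y (EuclideanSpace.single i 1) :=
      (h.fderiv (𝕜 := ℝ)).mono fun y hy => by simp only [hy]
    rw [hi.fderiv_eq]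

lemma lap_const (c : ℝ) (x : EuclideanSpace ℝ (Fin d)) : lap (fun _ => c) x = 0 := by
  simp [lap]

lemma lap_mul (hf : ContDiff ℝ 2 f) (hg : ContDiff ℝ 2 g) (x : EuclideanSpace ℝ (Fin d)) :
    lap (fun y => f y * g y) x = f x * lap g x + g x * lap f x
      + 2 * ∑ i, fderiv ℝ f x (EuclideanSpace.single i 1)
          * fderiv ℝ g x (EuclideanSpace.single i 1) := by
  simp only [lap, Finset.mul_sum, ← Finset.sum_add_distrib]
  refine Finset.sum_congr rfl fun i _ => ?_
  set e : EuclideanSpace ℝ (Fin d) := EuclideanSpace.single i 1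
  have hf0 := hf.differentiable two_ne_zero
  have hg0 := hg.differentiable two_ne_zero
  have hf1 := (contDiff_fderiv_apply_const (n := 1) hf e).differentiable one_ne_zero
  have hg1 := (contDiff_fderiv_apply_const (n := 1) hg e).differentiable one_ne_zero
  have hfst : (fun y => fderiv ℝ (fun y => f y * g y) y e)
      = fun y => f y * fderiv ℝ g y e + g y * fderiv ℝ f y e := funext fun y => by
    rw [fderiv_fun_mul (hf0 y) (hg0 y)]
    simp
  rw [hfst, fderiv_fun_add ((hf0.fun_mul hg1) x) ((hg0.fun_mul hf1) x),
    fderiv_fun_mul (hf0 x) (hg1 x), fderiv_fun_mul (hg0 x) (hf1 x)]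
  simp
  ring

lemma lap_const_mul (hf : ContDiff ℝ 2 f) (c : ℝ) (x : EuclideanSpace ℝ (Fin d)) :
    lap (fun y => c * f y) x = c * lap f x := by
  rw [lap_mul contDiff_const hf, lap_const]
  simp

lemma lap_comp_smul (hf : ContDiff ℝ 2 f) (c : ℝ) (x : EuclideanSpace ℝ (Fin d)) :
    lap (fun y => f (c • y)) x = c ^ 2 * lap f (c • x) := by
  rw [lap, lap, Finset.mul_sum]
  refine Finset.sum_congr rfl fun i _ => ?_
  have hi := contDiff_fderiv_apply_const (n := 1) hf (EuclideanSpace.single i 1)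
  have hi' : DifferentiableAt ℝ (fun y => fderiv ℝ f (c • y) (EuclideanSpace.single i 1)) x :=
    (hi.comp (contDiff_const_smul c)).differentiable one_ne_zero x
  simp only [fderiv_comp_smul, _root_.smul_apply, smul_eq_mul]
  rw [fderiv_const_mul hi', fderiv_comp_smul (f := fun y => fderiv ℝ f y _)]
  simp only [_root_.smul_apply, smul_eq_mul]
  ring

lemma lap_planeWave (a : ℝ) (ξ x : EuclideanSpace ℝ (Fin d)) :
    lap (planeWave a ξ) x = -(2 * π * ‖ξ‖) ^ 2 * planeWave a ξ x := by
  have hsnd (i : Fin d) : fderiv ℝ (fun y => fderiv ℝ (planeWave a ξ) y (EuclideanSpace.single i 1))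
      x (EuclideanSpace.single i 1) = -(2 * π) ^ 2 * planeWave a ξ x * ‖ξ i‖ ^ 2 := by
    simp only [fderiv_planeWave_apply]
    rw [fderiv_const_mul ((contDiff_planeWave _ _).differentiable (by simp) x), _root_.smul_apply,
      fderiv_planeWave_apply, add_assoc, add_halves, planeWave_add_pi]
    simp only [EuclideanSpace.inner_single_left, map_one, one_mul, smul_eq_mul, norm_eq_abs, sq_abs]
    ring
  simp only [lap, hsnd]
  rw [← Finset.mul_sum, ← EuclideanSpace.norm_sq_eq]
  ring

end Laplacian

/-- `ψ` is smooth, and `ψ`, its differential and its Laplacian are bounded by `C`: the functions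
that can be used to test an equation `∂ₜz = Δw - div g` with integrable coefficients. -/
structure IsSmoothBounded {d : ℕ} (C : ℝ) (ψ : EuclideanSpace ℝ (Fin d) → ℝ) : Prop where
  contDiff : ContDiff ℝ ∞ ψ
  abs_le : ∀ x, |ψ x| ≤ C
  norm_fderiv_le : ∀ x, ‖fderiv ℝ ψ x‖ ≤ C
  abs_lap_le : ∀ x, |lap ψ x| ≤ C

section IsSmoothBounded

variable {d : ℕ} {C K : ℝ} {ψ χ : EuclideanSpace ℝ (Fin d) → ℝ}

lemma exists_isSmoothBounded_of_hasCompactSupport (hψ : ContDiff ℝ ∞ ψ)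
    (hψc : HasCompactSupport ψ) : ∃ C, IsSmoothBounded C ψ := by
  obtain ⟨C₀, hC₀⟩ := hψc.exists_bound_of_continuous hψ.continuous
  obtain ⟨C₁, hC₁⟩ := (hψc.fderiv (𝕜 := ℝ)).exists_bound_of_continuous
    (hψ.continuous_fderiv (by simp))
  have hlap : HasCompactSupport (lap ψ) := .intro hψc fun x hx => by
    rw [lap_eq_of_eventuallyEq (notMem_tsupport_iff_eventuallyEq.1 hx)]
    exact lap_const 0 x
  obtain ⟨C₂, hC₂⟩ := hlap.exists_bound_of_continuous (continuous_lap (contDiff_infty.1 hψ 2))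
  exact ⟨max C₀ (max C₁ C₂), hψ, fun x => (hC₀ x).trans (by simp),
    fun x => (hC₁ x).trans (by simp), fun x => (hC₂ x).trans (by simp)⟩

lemma exists_isSmoothBounded_planeWave (a : ℝ) (ξ : EuclideanSpace ℝ (Fin d)) :
    ∃ C, IsSmoothBounded C (planeWave a ξ) := by
  have hfreq : 0 ≤ 2 * π * ‖ξ‖ := by positivity
  refine ⟨1 + 2 * π * ‖ξ‖ + (2 * π * ‖ξ‖) ^ 2, contDiff_planeWave a ξ, fun x => ?_, fun x => ?_,
    fun x => ?_⟩
  · exact (abs_planeWave_le_one a ξ x).trans (by nlinarith)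
  · refine ContinuousLinearMap.opNorm_le_bound _ (by positivity) fun v => ?_
    rw [fderiv_planeWave_apply, norm_mul, norm_mul, Real.norm_of_nonneg two_pi_pos.le]
    calc 2 * π * ‖⟪v, ξ⟫‖ * ‖planeWave (a + π / 2) ξ x‖
        ≤ 2 * π * (‖v‖ * ‖ξ‖) * 1 := by
          gcongr
          · exact norm_inner_le_norm v ξ
          · exact abs_planeWave_le_one _ ξ x
      _ = 2 * π * ‖ξ‖ * ‖v‖ := by ring
      _ ≤ (1 + 2 * π * ‖ξ‖ + (2 * π * ‖ξ‖) ^ 2) * ‖v‖ := by gcongr; nlinarith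
  · rw [lap_planeWave, abs_mul, abs_neg, abs_sq]
    exact (mul_le_of_le_one_right (sq_nonneg _) (abs_planeWave_le_one a ξ x)).trans (by linarith)

namespace IsSmoothBounded

lemma nonneg (hψ : IsSmoothBounded C ψ) : 0 ≤ C := (abs_nonneg _).trans (hψ.abs_le 0)

lemma contDiff_two (hψ : IsSmoothBounded C ψ) : ContDiff ℝ 2 ψ := contDiff_infty.1 hψ.contDiff 2

lemma differentiable (hψ : IsSmoothBounded C ψ) : Differentiable ℝ ψ :=
  hψ.contDiff.differentiable (by simp)

lemma comp_smul (hψ : IsSmoothBounded C ψ) {c : ℝ} (hc : |c| ≤ 1) :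
    IsSmoothBounded C fun x => ψ (c • x) where
  contDiff := hψ.contDiff.comp (contDiff_const_smul c)
  abs_le x := hψ.abs_le _
  norm_fderiv_le x := by
    rw [fderiv_comp_smul, norm_smul]
    exact (mul_le_of_le_one_left (norm_nonneg _) hc).trans (hψ.norm_fderiv_le _)
  abs_lap_le x := by
    rw [lap_comp_smul hψ.contDiff_two, abs_mul, abs_sq]
    exact (mul_le_of_le_one_left (abs_nonneg _) ((sq_le_one_iff_abs_le_one c).2 hc)).trans
      (hψ.abs_lap_le _)

lemma abs_sum_fderiv_mul_fderiv_le (hχ : IsSmoothBounded K χ) (hψ : IsSmoothBounded C ψ)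
    (x : EuclideanSpace ℝ (Fin d)) :
    |∑ i, fderiv ℝ χ x (EuclideanSpace.single i 1) * fderiv ℝ ψ x (EuclideanSpace.single i 1)|
      ≤ d * (K * C) := by
  have hpartial {D : ℝ} {η : EuclideanSpace ℝ (Fin d) → ℝ} (hη : IsSmoothBounded D η) (i : Fin d) :
      |fderiv ℝ η x (EuclideanSpace.single i 1)| ≤ D := by
    simpa using ContinuousLinearMap.le_of_opNorm_le _ (hη.norm_fderiv_le x)
      (EuclideanSpace.single i 1)
  calc _ ≤ ∑ i, |fderiv ℝ χ x (EuclideanSpace.single i 1)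
          * fderiv ℝ ψ x (EuclideanSpace.single i 1)| := Finset.abs_sum_le_sum_abs _ _
    _ ≤ ∑ _i : Fin d, K * C := Finset.sum_le_sum fun i _ => by
        rw [abs_mul]
        exact mul_le_mul (hpartial hχ i) (hpartial hψ i) (abs_nonneg _) hχ.nonneg
    _ = d * (K * C) := by simp

lemma mul (hχ : IsSmoothBounded K χ) (hψ : IsSmoothBounded C ψ) :
    IsSmoothBounded ((2 + 2 * d) * (K * C)) fun x => χ x * ψ x := by
  have hKC := mul_nonneg hχ.nonneg hψ.nonneg
  have hdKC : 0 ≤ (d : ℝ) * (K * C) := by positivity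
  have hle {p q : ℝ} (hp : |p| ≤ K) (hq : |q| ≤ C) : |p * q| ≤ K * C :=
    abs_mul p q ▸ mul_le_mul hp hq (abs_nonneg _) hχ.nonneg
  refine ⟨hχ.contDiff.mul hψ.contDiff, fun x => ?_, fun x => ?_, fun x => ?_⟩
  · exact (hle (hχ.abs_le x) (hψ.abs_le x)).trans (by linarith)
  · rw [fderiv_fun_mul (hχ.differentiable x) (hψ.differentiable x)]
    calc _ ≤ |χ x| * ‖fderiv ℝ ψ x‖ + |ψ x| * ‖fderiv ℝ χ x‖ := by
          simpa only [norm_smul, norm_eq_abs] using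
            norm_add_le (χ x • fderiv ℝ ψ x) (ψ x • fderiv ℝ χ x)
      _ ≤ K * C + C * K := by
          gcongr
          exacts [hχ.nonneg, hχ.abs_le x, hψ.norm_fderiv_le x, hψ.nonneg, hψ.abs_le x,
            hχ.norm_fderiv_le x]
      _ ≤ (2 + 2 * d) * (K * C) := by linarith
  · rw [lap_mul hχ.contDiff_two hψ.contDiff_two, mul_comm (ψ x)]
    calc _ ≤ |χ x * lap ψ x| + |lap χ x * ψ x| + |2 * _| := abs_add_three _ _ _
      _ ≤ K * C + K * C + 2 * (d * (K * C)) := by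
          rw [abs_mul 2, abs_two]
          gcongr
          exacts [hle (hχ.abs_le x) (hψ.abs_lap_le x), hle (hχ.abs_lap_le x) (hψ.abs_le x),
            abs_sum_fderiv_mul_fderiv_le hχ hψ x]
      _ = (2 + 2 * d) * (K * C) := by ring

lemma exists_seq_hasCompactSupport (hψ : IsSmoothBounded C ψ) :
    ∃ (C' : ℝ) (η : ℕ → EuclideanSpace ℝ (Fin d) → ℝ), (∀ n, IsSmoothBounded C' (η n)) ∧
      (∀ n, HasCompactSupport (η n)) ∧ ∀ x, ∀ᶠ n in atTop, η n =ᶠ[𝓝 x] ψ := by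
  let bump : ContDiffBump (0 : EuclideanSpace ℝ (Fin d)) := ⟨1, 2, one_pos, one_lt_two⟩
  obtain ⟨K, hK⟩ := exists_isSmoothBounded_of_hasCompactSupport bump.contDiff bump.hasCompactSupport
  let c : ℕ → ℝ := fun n => 1 / (n + 1)
  have hc0 : ∀ n, 0 < c n := fun n => Nat.one_div_pos_of_nat
  have hc1 : ∀ n, |c n| ≤ 1 := fun n => by
    rw [abs_of_pos (hc0 n)]
    exact (div_le_one (by positivity)).2 (by simp)
  refine ⟨_, fun n x => bump (c n • x) * ψ x, fun n => (hK.comp_smul (hc1 n)).mul hψ,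
    fun n => (bump.hasCompactSupport.comp_smul (hc0 n).ne').mul_right, fun x => ?_⟩
  have hlim : Tendsto (fun n => c n * ‖x‖) atTop (𝓝 0) := by
    simpa only [zero_mul] using tendsto_one_div_add_atTop_nhds_zero_nat.mul_const ‖x‖
  filter_upwards [hlim.eventually_lt_const one_pos] with n hn
  have hcont : Continuous fun y : EuclideanSpace ℝ (Fin d) => c n * ‖y‖ := by fun_prop
  filter_upwards [(hcont.tendsto x).eventually_lt_const hn] with y hy
  rw [bump.one_of_mem_closedBall, one_mul]
  rw [mem_closedBall_zero_iff, norm_smul, Real.norm_of_nonneg (hc0 n).le]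
  exact hy.le

end IsSmoothBounded

end IsSmoothBounded

/-! ### The linear Cauchy problem -/

/-- Lebesgue measure on the space-time slab `(0, T) × ℝ^d`. -/
abbrev slabVolume (T : ℝ) (d : ℕ) : Measure (ℝ × EuclideanSpace ℝ (Fin d)) :=
  (volume.restrict (Ioo 0 T)).prod volume

/-- `z` is a narrowly continuous distributional solution of `∂_t z = Δw - div g` on
`(0, T) × ℝ^d` with `z(0) = f`, all three fields being integrable on the slab. -/
structure IsCauchySolution {d : ℕ} (T : ℝ) (f : EuclideanSpace ℝ (Fin d) → ℝ)
    (z w : ℝ → EuclideanSpace ℝ (Fin d) → ℝ)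
    (g : ℝ → EuclideanSpace ℝ (Fin d) → EuclideanSpace ℝ (Fin d)) : Prop where
  integrable_slice : ∀ t ∈ Icc 0 T, Integrable (z t)
  continuousOn : ∀ ψ : EuclideanSpace ℝ (Fin d) → ℝ, Continuous ψ → (∃ C, ∀ x, |ψ x| ≤ C) →
    ContinuousOn (fun t => ∫ x, z t x * ψ x) (Icc 0 T)
  initial : z 0 =ᵐ[volume] f
  integrable_z : Integrable (uncurry z) (slabVolume T d)
  integrable_w : Integrable (uncurry w) (slabVolume T d)
  integrable_g : Integrable (uncurry g) (slabVolume T d)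
  weak : ∀ φ : ℝ → EuclideanSpace ℝ (Fin d) → ℝ, IsTestFunctionOn (Ioo 0 T ×ˢ univ) (uncurry φ) →
    ∫ t in Ioo 0 T, ∫ x,
      (z t x * deriv (fun s => φ s x) t + w t x * lap (φ t) x + fderiv ℝ (φ t) x (g t x)) = 0

/-- The distributional pairing `⟨Δw(s) - div g(s), ψ⟩`, with all derivatives moved onto `ψ`. -/
def sourcePairing {d : ℕ} (w : ℝ → EuclideanSpace ℝ (Fin d) → ℝ)
    (g : ℝ → EuclideanSpace ℝ (Fin d) → EuclideanSpace ℝ (Fin d))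
    (ψ : EuclideanSpace ℝ (Fin d) → ℝ) (s : ℝ) : ℝ :=
  ∫ x, (w s x * lap ψ x + fderiv ℝ ψ x (g s x))

section Testing

variable {d : ℕ} {T C : ℝ} {z w : ℝ → EuclideanSpace ℝ (Fin d) → ℝ}
  {g : ℝ → EuclideanSpace ℝ (Fin d) → EuclideanSpace ℝ (Fin d)}
  {ψ : EuclideanSpace ℝ (Fin d) → ℝ}

lemma IsTestFunctionOn.mul_prod {E F : Type*} [NormedAddCommGroup E] [NormedSpace ℝ E]
    [NormedAddCommGroup F] [NormedSpace ℝ F] {U : Set E} {V : Set F} {θ : E → ℝ} {η : F → ℝ}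
    (hθ : IsTestFunctionOn U θ) (hη : IsTestFunctionOn V η) :
    IsTestFunctionOn (U ×ˢ V) (uncurry fun t x => θ t * η x) := by
  have hsub : tsupport (uncurry fun t x => θ t * η x) ⊆ tsupport θ ×ˢ tsupport η := by
    refine closure_minimal (fun p hp => ?_) ((isClosed_tsupport θ).prod (isClosed_tsupport η))
    have hp' : θ p.1 * η p.2 ≠ 0 := hp
    exact ⟨subset_tsupport _ (left_ne_zero_of_mul hp'),
      subset_tsupport _ (right_ne_zero_of_mul hp')⟩
  exact ⟨(hθ.contDiff.comp contDiff_fst).mul (hη.contDiff.comp contDiff_snd),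
    (hθ.hasCompactSupport.isCompact.prod hη.hasCompactSupport.isCompact).of_isClosed_subset
      (isClosed_tsupport _) hsub,
    hsub.trans (prod_mono hθ.tsupport_subset hη.tsupport_subset)⟩

lemma IsSmoothBounded.norm_mul_lap_add_fderiv_le (hψ : IsSmoothBounded C ψ) (r : ℝ)
    (x v : EuclideanSpace ℝ (Fin d)) :
    ‖r * lap ψ x + fderiv ℝ ψ x v‖ ≤ C * (‖r‖ + ‖v‖) := by
  calc ‖r * lap ψ x + fderiv ℝ ψ x v‖ ≤ ‖r * lap ψ x‖ + ‖fderiv ℝ ψ x v‖ := norm_add_le _ _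
    _ ≤ ‖r‖ * C + C * ‖v‖ := by
        rw [norm_mul]
        gcongr
        · exact hψ.abs_lap_le x
        · exact ContinuousLinearMap.le_of_opNorm_le _ (hψ.norm_fderiv_le x) v
    _ = C * (‖r‖ + ‖v‖) := by ring

lemma IsSmoothBounded.integrable_mul {f : EuclideanSpace ℝ (Fin d) → ℝ}
    (hψ : IsSmoothBounded C ψ) (hf : Integrable f) : Integrable fun x => f x * ψ x :=
  hf.mul_bdd (c := C) hψ.contDiff.continuous.aestronglyMeasurable (.of_forall hψ.abs_le)

lemma integrable_source (hw : Integrable (uncurry w) (slabVolume T d))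
    (hg : Integrable (uncurry g) (slabVolume T d)) (hψ : IsSmoothBounded C ψ) :
    Integrable (fun p : ℝ × EuclideanSpace ℝ (Fin d) =>
      w p.1 p.2 * lap ψ p.2 + fderiv ℝ ψ p.2 (g p.1 p.2)) (slabVolume T d) := by
  have hlap : Continuous fun p : ℝ × EuclideanSpace ℝ (Fin d) => lap ψ p.2 :=
    (continuous_lap hψ.contDiff_two).comp continuous_snd
  have hfderiv : Continuous fun p : ℝ × EuclideanSpace ℝ (Fin d) => fderiv ℝ ψ p.2 :=
    (hψ.contDiff.continuous_fderiv (by simp)).comp continuous_snd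
  have happly : Continuous fun q : (EuclideanSpace ℝ (Fin d) →L[ℝ] ℝ) ×
      EuclideanSpace ℝ (Fin d) => q.1 q.2 := isBoundedBilinearMap_apply.continuous
  refine ((hw.norm.add hg.norm).const_mul C).mono' ?_
    (.of_forall fun p => hψ.norm_mul_lap_add_fderiv_le _ p.2 _)
  exact (hw.aestronglyMeasurable.mul hlap.aestronglyMeasurable).add
    (happly.comp_aestronglyMeasurable
      (hfderiv.aestronglyMeasurable.prodMk hg.aestronglyMeasurable))

lemma intervalIntegrable_sourcePairing (hT : 0 < T) (hw : Integrable (uncurry w) (slabVolume T d))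
    (hg : Integrable (uncurry g) (slabVolume T d)) (hψ : IsSmoothBounded C ψ) :
    IntervalIntegrable (sourcePairing w g ψ) volume 0 T := by
  rw [intervalIntegrable_iff_integrableOn_Ioo_of_le hT.le]
  exact (integrable_source hw hg hψ).integral_prod_left

lemma slabVolume_mono {s t : ℝ} (hst : s ≤ t) : slabVolume s d ≤ slabVolume t d :=
  Measure.prod_mono (Measure.restrict_mono (Ioo_subset_Ioo_right hst) le_rfl) le_rfl

lemma integral_sourcePairing_eq {t : ℝ} (ht : t ∈ Icc 0 T)
    (hw : Integrable (uncurry w) (slabVolume T d))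
    (hg : Integrable (uncurry g) (slabVolume T d)) (hψ : IsSmoothBounded C ψ) :
    ∫ s in 0..t, sourcePairing w g ψ s =
      ∫ p, (w p.1 p.2 * lap ψ p.2 + fderiv ℝ ψ p.2 (g p.1 p.2)) ∂slabVolume t d := by
  rw [intervalIntegral.integral_of_le ht.1, integral_Ioc_eq_integral_Ioo]
  exact (integral_prod _ ((integrable_source hw hg hψ).mono_measure (slabVolume_mono ht.2))).symm

end Testing

namespace IsCauchySolution

variable {d : ℕ} {T C t : ℝ} {f : EuclideanSpace ℝ (Fin d) → ℝ}
  {z w : ℝ → EuclideanSpace ℝ (Fin d) → ℝ}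
  {g : ℝ → EuclideanSpace ℝ (Fin d) → EuclideanSpace ℝ (Fin d)}
  {ψ : EuclideanSpace ℝ (Fin d) → ℝ}

lemma weak_mul (h : IsCauchySolution T f z w g) (hψ : IsTestFunctionOn univ ψ) {θ : ℝ → ℝ}
    (hθ : IsTestFunctionOn (Ioo 0 T) θ) :
    ∫ t in Ioo 0 T, (deriv θ t * (∫ x, z t x * ψ x) + θ t * sourcePairing w g ψ t) = 0 := by
  obtain ⟨C, hψC⟩ := exists_isSmoothBounded_of_hasCompactSupport hψ.contDiff hψ.hasCompactSupport
  refine Eq.trans (integral_congr_ae ?_) (h.weak _ (hθ.mul_prod hψ))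
  filter_upwards [ae_restrict_mem measurableSet_Ioo,
    (integrable_source h.integrable_w h.integrable_g hψC).prod_right_ae] with t ht hsource
  rw [sourcePairing, ← integral_const_mul, ← integral_const_mul, ← integral_add
    ((hψC.integrable_mul (h.integrable_slice t (Ioo_subset_Icc_self ht))).const_mul _)
    (hsource.const_mul _)]
  refine integral_congr_ae (.of_forall fun x => ?_)
  beta_reduce
  rw [deriv_mul_const (hθ.contDiff.differentiable (by simp) t), lap_const_mul hψC.contDiff_two,
    fderiv_const_mul (hψC.differentiable x), _root_.smul_apply, smul_eq_mul]
  ring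

lemma integral_mul_eq_of_hasCompactSupport (h : IsCauchySolution T f z w g) (hT : 0 < T)
    (hψ : IsTestFunctionOn univ ψ) (ht : t ∈ Icc 0 T) :
    ∫ x, z t x * ψ x = (∫ x, z 0 x * ψ x) + ∫ s in 0..t, sourcePairing w g ψ s := by
  obtain ⟨C, hψC⟩ := exists_isSmoothBounded_of_hasCompactSupport hψ.contDiff hψ.hasCompactSupport
  exact eq_add_integral_of_forall_integral_deriv_mul_add_eq_zero hT
    (h.continuousOn ψ hψ.contDiff.continuous ⟨C, hψC.abs_le⟩)
    (intervalIntegrable_sourcePairing hT h.integrable_w h.integrable_g hψC)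
    (fun θ hθ => h.weak_mul hψ hθ) ht

theorem integral_mul_eq (h : IsCauchySolution T f z w g) (hT : 0 < T)
    (hψ : IsSmoothBounded C ψ) (ht : t ∈ Icc 0 T) :
    ∫ x, z t x * ψ x = (∫ x, z 0 x * ψ x) + ∫ s in 0..t, sourcePairing w g ψ s := by
  obtain ⟨C', η, hη, hηc, hηψ⟩ := hψ.exists_seq_hasCompactSupport
  have hslice {s : ℝ} (hs : s ∈ Icc 0 T) :
      Tendsto (fun n => ∫ x, z s x * η n x) atTop (𝓝 (∫ x, z s x * ψ x)) := by
    refine tendsto_integral_of_dominated_convergence (fun x => ‖z s x‖ * C')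
      (fun n => ((hη n).integrable_mul (h.integrable_slice s hs)).aestronglyMeasurable)
      ((h.integrable_slice s hs).norm.mul_const _) (fun n => .of_forall fun x => ?_)
      (.of_forall fun x => ?_)
    · exact (norm_mul_le _ _).trans (by gcongr; exact (hη n).abs_le x)
    · exact tendsto_nhds_of_eventually_eq ((hηψ x).mono fun n hn => by rw [hn.self_of_nhds])
  have hsource : Tendsto (fun n => ∫ s in 0..t, sourcePairing w g (η n) s) atTop
      (𝓝 (∫ s in 0..t, sourcePairing w g ψ s)) := by
    simp only [integral_sourcePairing_eq ht h.integrable_w h.integrable_g (hη _),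
      integral_sourcePairing_eq ht h.integrable_w h.integrable_g hψ]
    have hbound := (h.integrable_w.norm.add h.integrable_g.norm).const_mul C'
    refine tendsto_integral_of_dominated_convergence _ (fun n => ((integrable_source h.integrable_w
      h.integrable_g (hη n)).mono_measure (slabVolume_mono ht.2)).aestronglyMeasurable)
      (hbound.mono_measure (slabVolume_mono ht.2))
      (fun n => .of_forall fun p => (hη n).norm_mul_lap_add_fderiv_le _ p.2 _)
      (.of_forall fun p => tendsto_nhds_of_eventually_eq ((hηψ p.2).mono fun n hn => ?_))
    rw [hn.fderiv_eq, lap_eq_of_eventuallyEq hn]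
  refine tendsto_nhds_unique (hslice ht)
    (((hslice (left_mem_Icc.2 hT.le)).add hsource).congr fun n => ?_)
  exact (h.integral_mul_eq_of_hasCompactSupport hT ⟨(hη n).contDiff, hηc n, subset_univ _⟩ ht).symm

end IsCauchySolution

/-! ### The equation on the Fourier side -/

section Symbol

variable {d : ℕ}

/-- The inclusion of `ℝ^d` into `ℂ^d`, which gives vector fields a Fourier transform. -/
def complexify (d : ℕ) : EuclideanSpace ℝ (Fin d) →ₗᵢ[ℝ] EuclideanSpace ℂ (Fin d) where
  toFun v := WithLp.toLp 2 fun i => (v i : ℂ)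
  map_add' v w := by ext i; simp
  map_smul' c v := by ext i; simp
  norm_map' v := by simp [EuclideanSpace.norm_eq]

lemma inner_complexify (v w : EuclideanSpace ℝ (Fin d)) :
    inner ℂ (complexify d v) (complexify d w) = (⟪v, w⟫ : ℝ) := by
  simp [complexify, PiLp.inner_apply]

/-- The Fourier transform of a real vector field. -/
def vectorFourier (g : EuclideanSpace ℝ (Fin d) → EuclideanSpace ℝ (Fin d))
    (ξ : EuclideanSpace ℝ (Fin d)) : EuclideanSpace ℂ (Fin d) :=
  𝓕 (fun x => complexify d (g x)) ξ

lemma inner_vectorFourier {g : EuclideanSpace ℝ (Fin d) → EuclideanSpace ℝ (Fin d)}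
    (hg : Integrable g) (η ξ : EuclideanSpace ℝ (Fin d)) :
    inner ℂ (complexify d η) (vectorFourier g ξ) = realFourier (fun x => ⟪η, g x⟫) ξ := by
  have hgξ : Integrable fun x => fourierChar (-⟪x, ξ⟫) • complexify d (g x) :=
    (fourierIntegral_convergent_iff ξ).2
      ((complexify d).toContinuousLinearMap.integrable_comp hg)
  rw [vectorFourier, realFourier, fourier_eq, fourier_eq, ← integral_inner hgξ]
  simp only [Circle.smul_def, inner_smul_right, inner_complexify, smul_eq_mul]

/-- The Fourier transform of `Δw - div g`, in terms of those of `w` and `g`. -/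
def sourceSymbol (w : EuclideanSpace ℝ (Fin d) → ℝ)
    (g : EuclideanSpace ℝ (Fin d) → EuclideanSpace ℝ (Fin d)) (ξ : EuclideanSpace ℝ (Fin d)) : ℂ :=
  -((2 * π * ‖ξ‖) ^ 2 : ℝ) * realFourier w ξ
    - 2 * π * Complex.I * inner ℂ (complexify d ξ) (vectorFourier g ξ)

lemma sourcePairing_planeWave {w : ℝ → EuclideanSpace ℝ (Fin d) → ℝ}
    {g : ℝ → EuclideanSpace ℝ (Fin d) → EuclideanSpace ℝ (Fin d)} {s : ℝ} (hw : Integrable (w s))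
    (hg : Integrable (g s)) (a : ℝ) (ξ : EuclideanSpace ℝ (Fin d)) :
    sourcePairing w g (planeWave a ξ) s = -(2 * π * ‖ξ‖) ^ 2 * (∫ x, w s x * planeWave a ξ x)
      + 2 * π * ∫ x, ⟪ξ, g s x⟫ * planeWave (a + π / 2) ξ x := by
  rw [sourcePairing, ← integral_const_mul, ← integral_const_mul,
    ← integral_add ((integrable_mul_planeWave hw a ξ).const_mul _)
      ((integrable_mul_planeWave (hg.const_inner ξ) _ ξ).const_mul _)]
  congr 1 with x
  rw [lap_planeWave, fderiv_planeWave_apply, real_inner_comm]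
  ring

lemma sourceSymbol_eq_sourcePairing {w : ℝ → EuclideanSpace ℝ (Fin d) → ℝ}
    {g : ℝ → EuclideanSpace ℝ (Fin d) → EuclideanSpace ℝ (Fin d)} {s : ℝ} (hw : Integrable (w s))
    (hg : Integrable (g s)) (ξ : EuclideanSpace ℝ (Fin d)) :
    sourceSymbol (w s) (g s) ξ = (sourcePairing w g (planeWave 0 ξ) s : ℂ)
      + (sourcePairing w g (planeWave (π / 2) ξ) s : ℂ) * Complex.I := by
  have hpi (x : EuclideanSpace ℝ (Fin d)) :
      planeWave (π / 2 + π / 2) ξ x = -planeWave 0 ξ x := by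
    rw [add_halves, ← planeWave_add_pi, zero_add]
  rw [sourceSymbol, inner_vectorFourier hg, realFourier_eq_integral_mul_planeWave hw,
    realFourier_eq_integral_mul_planeWave (hg.const_inner ξ),
    sourcePairing_planeWave hw hg, sourcePairing_planeWave hw hg]
  simp only [hpi, zero_add, mul_neg, integral_neg]
  push_cast
  linear_combination (-2 * π * (∫ x, ⟪ξ, g s x⟫ * planeWave (π / 2) ξ x : ℝ)) * Complex.I_sq

end Symbol

namespace IsCauchySolution

variable {d : ℕ} {T t : ℝ} {f : EuclideanSpace ℝ (Fin d) → ℝ}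
  {z w : ℝ → EuclideanSpace ℝ (Fin d) → ℝ}
  {g : ℝ → EuclideanSpace ℝ (Fin d) → EuclideanSpace ℝ (Fin d)}

lemma ae_sourceSymbol_eq_sourcePairing (h : IsCauchySolution T f z w g)
    (ξ : EuclideanSpace ℝ (Fin d)) :
    ∀ᵐ s ∂volume.restrict (Ioo 0 T), sourceSymbol (w s) (g s) ξ =
      (sourcePairing w g (planeWave 0 ξ) s : ℂ)
        + (sourcePairing w g (planeWave (π / 2) ξ) s : ℂ) * Complex.I := by
  filter_upwards [h.integrable_w.prod_right_ae, h.integrable_g.prod_right_ae] with s hw hg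
  exact sourceSymbol_eq_sourcePairing hw hg ξ

lemma intervalIntegrable_sourcePairing_planeWave (h : IsCauchySolution T f z w g) (hT : 0 < T)
    (a : ℝ) (ξ : EuclideanSpace ℝ (Fin d)) :
    IntervalIntegrable (fun s => (sourcePairing w g (planeWave a ξ) s : ℂ)) volume 0 T := by
  obtain ⟨C, hC⟩ := exists_isSmoothBounded_planeWave a ξ
  have hpair := intervalIntegrable_sourcePairing hT h.integrable_w h.integrable_g hC
  exact ⟨hpair.1.ofReal, hpair.2.ofReal⟩

lemma intervalIntegrable_sourceSymbol (h : IsCauchySolution T f z w g) (hT : 0 < T)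
    (ξ : EuclideanSpace ℝ (Fin d)) :
    IntervalIntegrable (fun s => sourceSymbol (w s) (g s) ξ) volume 0 T := by
  have hpair := (h.intervalIntegrable_sourcePairing_planeWave hT 0 ξ).add
    ((h.intervalIntegrable_sourcePairing_planeWave hT (π / 2) ξ).mul_const Complex.I)
  rw [intervalIntegrable_iff_integrableOn_Ioo_of_le hT.le] at hpair ⊢
  exact hpair.congr ((h.ae_sourceSymbol_eq_sourcePairing ξ).mono fun s hs => hs.symm)

theorem realFourier_eq_integral_sourceSymbol (h : IsCauchySolution T 0 z w g) (hT : 0 < T)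
    (ht : t ∈ Icc 0 T) (ξ : EuclideanSpace ℝ (Fin d)) :
    realFourier (z t) ξ = ∫ s in 0..t, sourceSymbol (w s) (g s) ξ := by
  have htest (a : ℝ) : ((∫ x, z t x * planeWave a ξ x : ℝ) : ℂ)
      = ∫ s in 0..t, (sourcePairing w g (planeWave a ξ) s : ℂ) := by
    obtain ⟨C, hC⟩ := exists_isSmoothBounded_planeWave a ξ
    have hinitial : ∫ x, z 0 x * planeWave a ξ x = 0 := integral_eq_zero_of_ae <| by
      filter_upwards [h.initial] with x hx
      simp only [hx, Pi.zero_apply, zero_mul]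
    rw [h.integral_mul_eq hT hC ht, hinitial, zero_add, intervalIntegral.integral_ofReal]
  have hint (a : ℝ) : IntervalIntegrable
      (fun s => (sourcePairing w g (planeWave a ξ) s : ℂ)) volume 0 t :=
    (h.intervalIntegrable_sourcePairing_planeWave hT a ξ).mono_set
      (uIcc_subset_uIcc_left (Icc_subset_uIcc ht))
  rw [realFourier_eq_integral_mul_planeWave (h.integrable_slice t ht), htest, htest,
    ← intervalIntegral.integral_mul_const,
    ← intervalIntegral.integral_add (hint 0) ((hint (π / 2)).mul_const _),
    intervalIntegral.integral_of_le ht.1, intervalIntegral.integral_of_le ht.1,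
    integral_Ioc_eq_integral_Ioo, integral_Ioc_eq_integral_Ioo]
  refine integral_congr_ae (ae_restrict_of_ae_restrict_of_subset (Ioo_subset_Ioo_right ht.2) ?_)
  exact (h.ae_sourceSymbol_eq_sourcePairing ξ).mono fun s hs => hs.symm

end IsCauchySolution

/-! ### The energy estimate in `H⁻¹` -/

section L2

lemma integrable_inner_of_memLp_two (𝕜 : Type*) {α H : Type*} [RCLike 𝕜] [MeasurableSpace α]
    {μ : Measure α} [NormedAddCommGroup H] [InnerProductSpace 𝕜 H] {f g : α → H}
    (hf : MemLp f 2 μ) (hg : MemLp g 2 μ) : Integrable (fun x => inner 𝕜 (f x) (g x)) μ :=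
  (hf.norm.integrable_mul hg.norm).mono' (hf.aestronglyMeasurable.inner hg.aestronglyMeasurable)
    (.of_forall fun x => norm_inner_le_norm (f x) (g x))

variable {d : ℕ} {f h : EuclideanSpace ℝ (Fin d) → ℝ}
  {g : EuclideanSpace ℝ (Fin d) → EuclideanSpace ℝ (Fin d)}

lemma memLp_two_realFourier (hf : Integrable f) (hf2 : MemLp f 2) : MemLp (realFourier f) 2 :=
  memLp_two_fourier hf.ofReal hf2.ofReal

lemma memLp_two_vectorFourier (hg : Integrable g) (hg2 : MemLp g 2) : MemLp (vectorFourier g) 2 :=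
  memLp_two_fourier ((complexify d).toContinuousLinearMap.integrable_comp hg)
    ((complexify d).toContinuousLinearMap.comp_memLp' hg2)

lemma integral_norm_sq_realFourier_eq (hf : Integrable f) (hf2 : MemLp f 2) :
    ∫ ξ, ‖realFourier f ξ‖ ^ 2 = ∫ x, f x ^ 2 := by
  refine (integral_norm_sq_fourier_eq hf.ofReal hf2.ofReal).trans ?_
  simp only [Complex.norm_real, norm_eq_abs, sq_abs]

lemma integral_norm_sq_vectorFourier_eq (hg : Integrable g) (hg2 : MemLp g 2) :
    ∫ ξ, ‖vectorFourier g ξ‖ ^ 2 = ∫ x, ‖g x‖ ^ 2 := by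
  refine (integral_norm_sq_fourier_eq ((complexify d).toContinuousLinearMap.integrable_comp hg)
    ((complexify d).toContinuousLinearMap.comp_memLp' hg2)).trans ?_
  simp

lemma integral_inner_realFourier_eq (hf : Integrable f) (hf2 : MemLp f 2) (hh : Integrable h)
    (hh2 : MemLp h 2) : ∫ ξ, ⟪realFourier f ξ, realFourier h ξ⟫ = ∫ x, f x * h x := by
  have hplancherel : ∫ ξ, inner ℂ (realFourier f ξ) (realFourier h ξ)
      = ∫ x, inner ℂ (f x : ℂ) (h x : ℂ) :=
    integral_inner_fourier_eq (H := ℂ) hf.ofReal hf2.ofReal hh.ofReal hh2.ofReal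
  have hint : Integrable fun ξ => inner ℂ (realFourier f ξ) (realFourier h ξ) :=
    integrable_inner_of_memLp_two ℂ (memLp_two_realFourier hf hf2) (memLp_two_realFourier hh hh2)
  simp only [real_inner_eq_re_inner ℂ]
  rw [integral_re hint, hplancherel]
  simp only [RCLike.inner_apply, Complex.conj_ofReal, ← Complex.ofReal_mul,
    integral_complex_ofReal, mul_comm]
  exact Complex.ofReal_re _

variable {α : Type*} [MeasurableSpace α] {μ : Measure α} [SFinite μ]

lemma memLp_two_uncurry_realFourier {k : α → EuclideanSpace ℝ (Fin d) → ℝ}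
    (hk : Integrable (uncurry k) (μ.prod volume)) (hk2 : MemLp (uncurry k) 2 (μ.prod volume)) :
    MemLp (uncurry fun t => realFourier (k t)) 2 (μ.prod volume) :=
  memLp_two_uncurry_fourier (k := fun t x => (k t x : ℂ))
    (hk.prod_right_ae.mono fun _ ht => ht.ofReal) hk2.ofReal

lemma memLp_two_uncurry_vectorFourier
    {k : α → EuclideanSpace ℝ (Fin d) → EuclideanSpace ℝ (Fin d)}
    (hk : Integrable (uncurry k) (μ.prod volume)) (hk2 : MemLp (uncurry k) 2 (μ.prod volume)) :
    MemLp (uncurry fun t => vectorFourier (k t)) 2 (μ.prod volume) :=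
  memLp_two_uncurry_fourier (k := fun t x => complexify d (k t x))
    (hk.prod_right_ae.mono fun _ ht => (complexify d).toContinuousLinearMap.integrable_comp ht)
    ((complexify d).toContinuousLinearMap.comp_memLp' hk2)

end L2

section Energy

variable {d : ℕ}

/-- The Fourier symbol `(1 + |2πξ|²)⁻¹` of `(1 - Δ)⁻¹`. -/
def resolventSymbol (ξ : EuclideanSpace ℝ (Fin d)) : ℝ := (1 + (2 * π * ‖ξ‖) ^ 2)⁻¹

lemma resolventSymbol_pos (ξ : EuclideanSpace ℝ (Fin d)) : 0 < resolventSymbol ξ := by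
  unfold resolventSymbol; positivity

lemma resolventSymbol_le_one (ξ : EuclideanSpace ℝ (Fin d)) : resolventSymbol ξ ≤ 1 :=
  inv_le_one_of_one_le₀ (by nlinarith [sq_nonneg (2 * π * ‖ξ‖)])

lemma resolventSymbol_mul_sq (ξ : EuclideanSpace ℝ (Fin d)) :
    resolventSymbol ξ * (2 * π * ‖ξ‖) ^ 2 = 1 - resolventSymbol ξ := by
  unfold resolventSymbol
  field_simp
  ring

lemma continuous_resolventSymbol : Continuous (resolventSymbol (d := d)) :=
  Continuous.inv₀ (by fun_prop) fun ξ => by positivity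

lemma integrable_resolventSymbol_mul {α : Type*} [MeasurableSpace α] {μ : Measure α}
    {ξ : α → EuclideanSpace ℝ (Fin d)} (hξ : Measurable ξ) {f : α → ℝ} (hf : Integrable f μ) :
    Integrable (fun a => resolventSymbol (ξ a) * f a) μ := by
  refine hf.bdd_mul (c := 1)
    (continuous_resolventSymbol.measurable.comp hξ).aestronglyMeasurable (.of_forall fun a => ?_)
  rw [norm_of_nonneg (resolventSymbol_pos _).le]
  exact resolventSymbol_le_one _

variable {ε γ L : ℝ} {z w : EuclideanSpace ℝ (Fin d) → ℝ}
  {g : EuclideanSpace ℝ (Fin d) → EuclideanSpace ℝ (Fin d)}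

/-- The squared norm of `z` in `H⁻¹(ℝ^d)`, computed on the Fourier side. -/
def negSobolevEnergy (z : EuclideanSpace ℝ (Fin d) → ℝ) : ℝ :=
  ∫ ξ, resolventSymbol ξ * ‖realFourier z ξ‖ ^ 2

/-- A bound, obtained from Young's inequality with parameter `ε`, for the rate of change at
frequency `ξ` of the `H⁻¹` energy of a solution of `∂_t z = Δw - div g`. -/
def energyRate (ε : ℝ) (z w : EuclideanSpace ℝ (Fin d) → ℝ)
    (g : EuclideanSpace ℝ (Fin d) → EuclideanSpace ℝ (Fin d)) (ξ : EuclideanSpace ℝ (Fin d)) : ℝ :=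
  -2 * ⟪realFourier z ξ, realFourier w ξ⟫
    + ε * (‖realFourier w ξ‖ ^ 2 + ‖vectorFourier g ξ‖ ^ 2)
    + 2 / ε * (resolventSymbol ξ * ‖realFourier z ξ‖ ^ 2)

lemma two_mul_mul_le_of_mul_sq_le_one {m q r s : ℝ} (hε : 0 < ε) (hm : 0 ≤ m)
    (hmq : m * q ^ 2 ≤ 1) : 2 * m * (r * (q * s)) ≤ ε * s ^ 2 + 1 / ε * (m * r ^ 2) := by
  have hyoung : 0 ≤ m / ε * (r - ε * (q * s)) ^ 2 := by positivity
  have hexpand : m / ε * (r - ε * (q * s)) ^ 2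
      = 1 / ε * (m * r ^ 2) - 2 * m * (r * (q * s)) + ε * ((m * q ^ 2) * s ^ 2) := by
    field_simp
    ring
  have hmqs : ε * ((m * q ^ 2) * s ^ 2) ≤ ε * s ^ 2 := by
    gcongr
    exact mul_le_of_le_one_left (sq_nonneg s) hmq
  linarith

lemma norm_two_pi_I_mul_inner_vectorFourier_le
    (g : EuclideanSpace ℝ (Fin d) → EuclideanSpace ℝ (Fin d)) (ξ : EuclideanSpace ℝ (Fin d)) :
    ‖2 * π * Complex.I * inner ℂ (complexify d ξ) (vectorFourier g ξ)‖
      ≤ 2 * π * ‖ξ‖ * ‖vectorFourier g ξ‖ := by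
  have hcs := norm_inner_le_norm (𝕜 := ℂ) (complexify d ξ) (vectorFourier g ξ)
  rw [LinearIsometry.norm_map] at hcs
  calc ‖2 * π * Complex.I * inner ℂ (complexify d ξ) (vectorFourier g ξ)‖
      = 2 * π * ‖inner ℂ (complexify d ξ) (vectorFourier g ξ)‖ := by simp [abs_of_pos pi_pos]
    _ ≤ 2 * π * (‖ξ‖ * ‖vectorFourier g ξ‖) := by gcongr
    _ = 2 * π * ‖ξ‖ * ‖vectorFourier g ξ‖ := by ring

lemma resolventSymbol_mul_inner_sourceSymbol_le (hε : 0 < ε) (ξ : EuclideanSpace ℝ (Fin d)) :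
    resolventSymbol ξ * (2 * ⟪realFourier z ξ, sourceSymbol w g ξ⟫) ≤ energyRate ε z w g ξ := by
  set m := resolventSymbol ξ
  set q := 2 * π * ‖ξ‖
  set V : ℂ := 2 * π * Complex.I * inner ℂ (complexify d ξ) (vectorFourier g ξ)
  have hm0 : 0 ≤ m := (resolventSymbol_pos ξ).le
  have hmq : m * q ^ 2 = 1 - m := resolventSymbol_mul_sq ξ
  have hdrift : -⟪realFourier z ξ, V⟫ ≤ ‖realFourier z ξ‖ * (q * ‖vectorFourier g ξ‖) :=
    (neg_le_abs _).trans ((abs_real_inner_le_norm _ _).trans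
      (by gcongr; exact norm_two_pi_I_mul_inner_vectorFourier_le g ξ))
  have hinner : ⟪realFourier z ξ, sourceSymbol w g ξ⟫
      = -q ^ 2 * ⟪realFourier z ξ, realFourier w ξ⟫ - ⟪realFourier z ξ, V⟫ := by
    rw [sourceSymbol, inner_sub_right, ← Complex.ofReal_neg, ← Complex.real_smul,
      real_inner_smul_right]
  have hyoung_w := two_mul_mul_le_of_mul_sq_le_one (q := 1) (r := ‖realFourier z ξ‖)
    (s := ‖realFourier w ξ‖) hε hm0 (by simpa using resolventSymbol_le_one ξ)
  have hyoung_g := two_mul_mul_le_of_mul_sq_le_one (r := ‖realFourier z ξ‖)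
    (s := ‖vectorFourier g ξ‖) hε hm0 (hmq.trans_le (by linarith))
  rw [one_mul] at hyoung_w
  calc m * (2 * ⟪realFourier z ξ, sourceSymbol w g ξ⟫)
      = -2 * ⟪realFourier z ξ, realFourier w ξ⟫ + 2 * m * ⟪realFourier z ξ, realFourier w ξ⟫
          + 2 * m * -⟪realFourier z ξ, V⟫ := by
        rw [hinner]
        linear_combination (-2 * ⟪realFourier z ξ, realFourier w ξ⟫) * hmq
    _ ≤ -2 * ⟪realFourier z ξ, realFourier w ξ⟫
          + 2 * m * (‖realFourier z ξ‖ * ‖realFourier w ξ‖)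
          + 2 * m * (‖realFourier z ξ‖ * (q * ‖vectorFourier g ξ‖)) := by
        gcongr
        exact real_inner_le_norm _ _
    _ ≤ energyRate ε z w g ξ := by
        rw [energyRate, div_eq_mul_one_div 2 ε]
        linarith

lemma integral_energyRate_eq (ε : ℝ) (hz : Integrable z) (hz2 : MemLp z 2) (hw : Integrable w)
    (hw2 : MemLp w 2) (hg : Integrable g) (hg2 : MemLp g 2) :
    ∫ ξ, energyRate ε z w g ξ = -2 * (∫ x, z x * w x) + ε * ((∫ x, w x ^ 2) + ∫ x, ‖g x‖ ^ 2)
      + 2 / ε * negSobolevEnergy z := by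
  have hFz := memLp_two_realFourier hz hz2
  have hFw := memLp_two_realFourier hw hw2
  have hzw := (integrable_inner_of_memLp_two ℝ hFz hFw).const_mul (-2)
  have hw_sq := hFw.integrable_norm_pow two_ne_zero
  have hg_sq := (memLp_two_vectorFourier hg hg2).integrable_norm_pow two_ne_zero
  have hyoung := (hw_sq.fun_add hg_sq).const_mul ε
  have henergy := (integrable_resolventSymbol_mul (ξ := fun ξ => ξ) measurable_id
    (hFz.integrable_norm_pow two_ne_zero)).const_mul (2 / ε)
  simp only [energyRate, negSobolevEnergy]
  rw [← integral_norm_sq_realFourier_eq hw hw2, ← integral_norm_sq_vectorFourier_eq hg hg2,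
    ← integral_inner_realFourier_eq hz hz2 hw hw2, ← integral_add hw_sq hg_sq,
    ← integral_const_mul, ← integral_const_mul, ← integral_const_mul,
    ← integral_add hzw hyoung, ← integral_add (hzw.fun_add hyoung) henergy]

lemma integral_energyRate_le (hε : 0 ≤ ε) (hεL : ε * L ^ 2 ≤ γ) (hz : Integrable z)
    (hz2 : MemLp z 2) (hw : Integrable w) (hw2 : MemLp w 2) (hg : Integrable g) (hg2 : MemLp g 2)
    (hzw : ∀ᵐ x, γ * z x ^ 2 ≤ z x * w x) (hwz : ∀ᵐ x, |w x| ≤ L * |z x|)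
    (hgz : ∀ᵐ x, ‖g x‖ ≤ L * |z x|) :
    ∫ ξ, energyRate ε z w g ξ ≤ 2 / ε * negSobolevEnergy z := by
  have hzw_int : Integrable fun x => z x * w x := hz2.integrable_mul hw2
  have hw_sq : Integrable fun x => w x ^ 2 := hw2.integrable_sq
  have hg_sq : Integrable fun x => ‖g x‖ ^ 2 := hg2.integrable_norm_pow two_ne_zero
  have hsum : ε * ((∫ x, w x ^ 2) + ∫ x, ‖g x‖ ^ 2) ≤ 2 * ∫ x, z x * w x := by
    rw [← integral_add hw_sq hg_sq, ← integral_const_mul, ← integral_const_mul]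
    refine integral_mono_ae ((hw_sq.add hg_sq).const_mul ε) (hzw_int.const_mul 2) ?_
    filter_upwards [hzw, hwz, hgz] with x hx hwx hgx
    have hw_le : w x ^ 2 ≤ L ^ 2 * z x ^ 2 := by
      rw [← sq_abs (w x), ← sq_abs (z x), ← mul_pow]; gcongr
    have hg_le : ‖g x‖ ^ 2 ≤ L ^ 2 * z x ^ 2 := by
      rw [← sq_abs (z x), ← mul_pow]; gcongr
    calc ε * (w x ^ 2 + ‖g x‖ ^ 2) ≤ ε * (L ^ 2 * z x ^ 2 + L ^ 2 * z x ^ 2) := by gcongr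
      _ = 2 * (ε * L ^ 2 * z x ^ 2) := by ring
      _ ≤ 2 * (γ * z x ^ 2) := by gcongr
      _ ≤ 2 * (z x * w x) := by gcongr
  rw [integral_energyRate_eq ε hz hz2 hw hw2 hg hg2]
  linarith

end Energy

/-- Structure conditions closing the `H⁻¹` estimate for `∂_t z = Δw - div g` on `(0,T) × ℝ^d`:
the pairing of `w` with `z` is coercive with constant `γ`, and `w` and `g` grow at most linearly
in `z` with constant `L`. -/
structure IsCoerciveFlux {d : ℕ} (T γ L : ℝ) (z w : ℝ → EuclideanSpace ℝ (Fin d) → ℝ)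
    (g : ℝ → EuclideanSpace ℝ (Fin d) → EuclideanSpace ℝ (Fin d)) : Prop where
  memLp_two : MemLp (uncurry z) 2 (slabVolume T d)
  coercive : ∀ᵐ p ∂slabVolume T d, γ * z p.1 p.2 ^ 2 ≤ z p.1 p.2 * w p.1 p.2
  abs_le : ∀ᵐ p ∂slabVolume T d, |w p.1 p.2| ≤ L * |z p.1 p.2|
  norm_le : ∀ᵐ p ∂slabVolume T d, ‖g p.1 p.2‖ ≤ L * |z p.1 p.2|

lemma ae_eq_zero_of_negSobolevEnergy_nonpos {d : ℕ} {f : EuclideanSpace ℝ (Fin d) → ℝ}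
    (hf : Integrable f) (hf2 : MemLp f 2) (hE : negSobolevEnergy f ≤ 0) : f =ᵐ[volume] 0 := by
  have hnonneg (ξ : EuclideanSpace ℝ (Fin d)) :
      0 ≤ resolventSymbol ξ * ‖realFourier f ξ‖ ^ 2 :=
    mul_nonneg (resolventSymbol_pos ξ).le (sq_nonneg _)
  have hzero := (integral_eq_zero_iff_of_nonneg hnonneg (integrable_resolventSymbol_mul
    measurable_id ((memLp_two_realFourier hf hf2).integrable_norm_pow two_ne_zero))).1
    (hE.antisymm (integral_nonneg hnonneg))
  have hfourier : ∫ ξ, ‖realFourier f ξ‖ ^ 2 = 0 := integral_eq_zero_of_ae <|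
    hzero.mono fun ξ hξ => (mul_eq_zero.1 hξ).resolve_left (resolventSymbol_pos ξ).ne'
  rw [integral_norm_sq_realFourier_eq hf hf2,
    integral_eq_zero_iff_of_nonneg (fun x => sq_nonneg _) hf2.integrable_sq] at hfourier
  exact hfourier.mono fun x hx => pow_eq_zero_iff two_ne_zero |>.1 hx

namespace IsCauchySolution

variable {d : ℕ} {T t ε γ L : ℝ} {f : EuclideanSpace ℝ (Fin d) → ℝ}
  {z w : ℝ → EuclideanSpace ℝ (Fin d) → ℝ}
  {g : ℝ → EuclideanSpace ℝ (Fin d) → EuclideanSpace ℝ (Fin d)}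

lemma integrable_energyRate (h : IsCauchySolution T f z w g) (ε : ℝ)
    (hz2 : MemLp (uncurry z) 2 (slabVolume T d)) (hw2 : MemLp (uncurry w) 2 (slabVolume T d))
    (hg2 : MemLp (uncurry g) 2 (slabVolume T d)) :
    Integrable (fun p : ℝ × EuclideanSpace ℝ (Fin d) =>
      energyRate ε (z p.1) (w p.1) (g p.1) p.2) (slabVolume T d) := by
  have hFz := memLp_two_uncurry_realFourier h.integrable_z hz2
  have hFw := memLp_two_uncurry_realFourier h.integrable_w hw2
  have hFg := memLp_two_uncurry_vectorFourier h.integrable_g hg2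
  exact (((integrable_inner_of_memLp_two ℝ hFz hFw).const_mul (-2)).add
    (((hFw.integrable_norm_pow two_ne_zero).add (hFg.integrable_norm_pow two_ne_zero)).const_mul
      ε)).add ((integrable_resolventSymbol_mul measurable_snd
        (hFz.integrable_norm_pow two_ne_zero)).const_mul (2 / ε))

lemma resolventSymbol_mul_norm_sq_le_integral_energyRate (h : IsCauchySolution T 0 z w g)
    (hT : 0 < T) (hε : 0 < ε) (ht : t ∈ Icc 0 T) {ξ : EuclideanSpace ℝ (Fin d)}
    (hξ : IntervalIntegrable (fun s => energyRate ε (z s) (w s) (g s) ξ) volume 0 t) :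
    resolventSymbol ξ * ‖realFourier (z t) ξ‖ ^ 2
      ≤ ∫ s in 0..t, energyRate ε (z s) (w s) (g s) ξ := by
  have hsub : uIcc 0 t ⊆ uIcc 0 T := uIcc_subset_uIcc_left (Icc_subset_uIcc ht)
  have hsymbol := h.intervalIntegrable_sourceSymbol hT ξ
  have hode : ∀ s ∈ Icc 0 T, realFourier (z s) ξ = ∫ r in 0..s, sourceSymbol (w r) (g r) ξ :=
    fun s hs => h.realFourier_eq_integral_sourceSymbol hT hs ξ
  have hcont : ContinuousOn (fun s => realFourier (z s) ξ) (uIcc 0 t) :=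
    ((intervalIntegral.continuousOn_primitive_interval' hsymbol left_mem_uIcc).congr
      fun s hs => hode s (by rwa [uIcc_of_le hT.le] at hs)).mono hsub
  have hinner : IntervalIntegrable
      (fun s => 2 * ⟪realFourier (z s) ξ, sourceSymbol (w s) (g s) ξ⟫) volume 0 t :=
    (intervalIntegrable_inner_of_continuousOn hcont (hsymbol.mono_set hsub)).const_mul 2
  rw [norm_sq_eq_integral_of_eq_integral hsymbol hode ht, ← intervalIntegral.integral_const_mul]
  exact intervalIntegral.integral_mono_on ht.1 (hinner.const_mul _) hξ
    fun s _ => resolventSymbol_mul_inner_sourceSymbol_le hε ξ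

lemma negSobolevEnergy_le_integral_energyRate (h : IsCauchySolution T 0 z w g) (hT : 0 < T)
    (hε : 0 < ε) (hz2 : MemLp (uncurry z) 2 (slabVolume T d))
    (hw2 : MemLp (uncurry w) 2 (slabVolume T d)) (hg2 : MemLp (uncurry g) 2 (slabVolume T d))
    (ht : t ∈ Icc 0 T) :
    negSobolevEnergy (z t) ≤ ∫ s in 0..t, ∫ ξ, energyRate ε (z s) (w s) (g s) ξ := by
  have hrate := (h.integrable_energyRate ε hz2 hw2 hg2).mono_measure (slabVolume_mono ht.2)
  rw [intervalIntegral.integral_of_le ht.1, integral_Ioc_eq_integral_Ioo,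
    integral_integral_swap hrate]
  refine integral_mono_of_nonneg (.of_forall fun ξ => ?_) hrate.integral_prod_right ?_
  · exact mul_nonneg (resolventSymbol_pos ξ).le (sq_nonneg _)
  filter_upwards [hrate.prod_left_ae] with ξ hξ
  refine (h.resolventSymbol_mul_norm_sq_le_integral_energyRate hT hε ht
    ((intervalIntegrable_iff_integrableOn_Ioo_of_le ht.1).2 hξ)).trans_eq ?_
  rw [intervalIntegral.integral_of_le ht.1, integral_Ioc_eq_integral_Ioo]

lemma intervalIntegrable_negSobolevEnergy (h : IsCauchySolution T f z w g) (hT : 0 < T)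
    (hz2 : MemLp (uncurry z) 2 (slabVolume T d)) :
    IntervalIntegrable (fun t => negSobolevEnergy (z t)) volume 0 T := by
  have hFz := memLp_two_uncurry_realFourier h.integrable_z hz2
  rw [intervalIntegrable_iff_integrableOn_Ioo_of_le hT.le]
  exact (integrable_resolventSymbol_mul measurable_snd
    (hFz.integrable_norm_pow two_ne_zero)).integral_prod_left

lemma negSobolevEnergy_le_mul_integral (h : IsCauchySolution T 0 z w g) (hT : 0 < T)
    (hflux : IsCoerciveFlux T γ L z w g) (hε : 0 < ε) (hεL : ε * L ^ 2 ≤ γ) (ht : t ∈ Icc 0 T) :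
    negSobolevEnergy (z t) ≤ 2 / ε * ∫ s in 0..t, negSobolevEnergy (z s) := by
  have hz2 := hflux.memLp_two
  have hw2 := hz2.of_le_mul h.integrable_w.aestronglyMeasurable hflux.abs_le
  have hg2 := hz2.of_le_mul h.integrable_g.aestronglyMeasurable hflux.norm_le
  have hsub : uIcc 0 t ⊆ uIcc 0 T := uIcc_subset_uIcc_left (Icc_subset_uIcc ht)
  have hrate : IntervalIntegrable (fun s => ∫ ξ, energyRate ε (z s) (w s) (g s) ξ) volume 0 t :=
    ((intervalIntegrable_iff_integrableOn_Ioo_of_le hT.le).2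
      (h.integrable_energyRate ε hz2 hw2 hg2).integral_prod_left).mono_set hsub
  refine (h.negSobolevEnergy_le_integral_energyRate hT hε hz2 hw2 hg2 ht).trans ?_
  rw [← intervalIntegral.integral_const_mul]
  refine intervalIntegral.integral_mono_ae_restrict ht.1 hrate
    (((h.intervalIntegrable_negSobolevEnergy hT hz2).mono_set hsub).const_mul _) ?_
  rw [Filter.EventuallyLE, ← restrict_Ioo_eq_restrict_Icc]
  refine ae_restrict_of_ae_restrict_of_subset (Ioo_subset_Ioo_right ht.2) ?_
  filter_upwards [h.integrable_z.prod_right_ae, ae_memLp_two_of_memLp_two_prod hz2,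
    h.integrable_w.prod_right_ae, ae_memLp_two_of_memLp_two_prod hw2,
    h.integrable_g.prod_right_ae, ae_memLp_two_of_memLp_two_prod hg2,
    Measure.ae_ae_of_ae_prod hflux.coercive, Measure.ae_ae_of_ae_prod hflux.abs_le,
    Measure.ae_ae_of_ae_prod hflux.norm_le] with s hz hz2 hw hw2 hg hg2 hzw hwz hgz
  exact integral_energyRate_le hε.le hεL hz hz2 hw hw2 hg hg2 hzw hwz hgz

lemma ae_ae_eq_zero (h : IsCauchySolution T 0 z w g) (hT : 0 < T) (hγ : 0 < γ)
    (hflux : IsCoerciveFlux T γ L z w g) :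
    ∀ᵐ t ∂volume.restrict (Ioo 0 T), z t =ᵐ[volume] 0 := by
  have hε : 0 < γ / (L ^ 2 + 1) := by positivity
  have hεL : γ / (L ^ 2 + 1) * L ^ 2 ≤ γ := by
    rw [div_mul_eq_mul_div, div_le_iff₀ (by positivity)]
    nlinarith
  have henergy := ae_nonpos_of_ae_le_mul_integral
    (h.intervalIntegrable_negSobolevEnergy hT hflux.memLp_two)
    (fun t => integral_nonneg fun ξ => mul_nonneg (resolventSymbol_pos ξ).le (sq_nonneg _))
    (.of_forall fun t ht =>
      h.negSobolevEnergy_le_mul_integral hT hflux hε hεL (Ioo_subset_Icc_self ht))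
  filter_upwards [(ae_restrict_iff' measurableSet_Ioo).2 henergy, h.integrable_z.prod_right_ae,
    ae_memLp_two_of_memLp_two_prod hflux.memLp_two] with t ht hz hz2
  exact ae_eq_zero_of_negSobolevEnergy_nonpos hz hz2 ht

theorem ae_eq_zero (h : IsCauchySolution T 0 z w g) (hT : 0 < T) (hγ : 0 < γ)
    (hflux : IsCoerciveFlux T γ L z w g) (ht : t ∈ Icc 0 T) : z t =ᵐ[volume] 0 := by
  refine ae_eq_zero_of_integral_contDiff_smul_eq_zero (h.integrable_slice t ht).locallyIntegrable
    fun ψ hψ hψc => ?_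
  have hcont := h.continuousOn ψ hψ.continuous (hψc.exists_bound_of_continuous hψ.continuous)
  have hae : (fun s => ∫ x, z s x * ψ x) =ᵐ[volume.restrict (Ioo 0 T)] fun _ => 0 := by
    filter_upwards [h.ae_ae_eq_zero hT hγ hflux] with s hs
    exact integral_eq_zero_of_ae (hs.mono fun x hx => by simp [hx])
  have heq : EqOn (fun s => ∫ x, z s x * ψ x) (fun _ => 0) (Icc 0 T) :=
    (Measure.eqOn_open_of_ae_eq hae isOpen_Ioo (hcont.mono Ioo_subset_Icc_self)
      continuousOn_const).of_subset_closure hcont continuousOn_const Ioo_subset_Icc_self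
      (closure_Ioo hT.ne).ge
  simpa only [smul_eq_mul, mul_comm] using heq ht

end IsCauchySolution

/-! ### Superposition -/

section SpaceTimeDerivatives

variable {d : ℕ} {φ : ℝ → EuclideanSpace ℝ (Fin d) → ℝ}

lemma fderiv_eq_fderiv_uncurry_comp_inr (hφ : Differentiable ℝ (uncurry φ)) (t : ℝ)
    (x : EuclideanSpace ℝ (Fin d)) :
    fderiv ℝ (φ t) x = (fderiv ℝ (uncurry φ) (t, x)).comp (.inr ℝ ℝ _) :=
  ((hφ (t, x)).hasFDerivAt.comp x (hasFDerivAt_prodMk_right t x)).fderiv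

lemma fderiv_apply_eq_fderiv_uncurry_apply (hφ : Differentiable ℝ (uncurry φ)) (t : ℝ)
    (x v : EuclideanSpace ℝ (Fin d)) :
    fderiv ℝ (φ t) x v = fderiv ℝ (uncurry φ) (t, x) (0, v) := by
  rw [fderiv_eq_fderiv_uncurry_comp_inr hφ, ContinuousLinearMap.comp_apply,
    ContinuousLinearMap.inr_apply]

lemma deriv_eq_fderiv_uncurry_apply (hφ : Differentiable ℝ (uncurry φ)) (t : ℝ)
    (x : EuclideanSpace ℝ (Fin d)) :
    deriv (fun s => φ s x) t = fderiv ℝ (uncurry φ) (t, x) (1, 0) := by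
  refine (((hφ (t, x)).hasFDerivAt.comp t (hasFDerivAt_prodMk_left t x)).hasDerivAt).deriv.trans ?_
  rw [ContinuousLinearMap.comp_apply, ContinuousLinearMap.inl_apply]

lemma lap_eq_sum_fderiv_uncurry (hφ : ContDiff ℝ ∞ (uncurry φ)) (t : ℝ)
    (x : EuclideanSpace ℝ (Fin d)) :
    lap (φ t) x = ∑ i, fderiv ℝ (fun p => fderiv ℝ (uncurry φ) p (0, EuclideanSpace.single i 1))
      (t, x) (0, EuclideanSpace.single i 1) := by
  refine Finset.sum_congr rfl fun i _ => ?_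
  have hφi : ContDiff ℝ ∞
      (uncurry fun t x => fderiv ℝ (uncurry φ) (t, x) (0, EuclideanSpace.single i 1)) :=
    (hφ.fderiv_right (m := ∞) (by simp)).clm_apply contDiff_const
  simp only [fderiv_apply_eq_fderiv_uncurry_apply (hφ.differentiable (by simp))]
  exact fderiv_apply_eq_fderiv_uncurry_apply (hφi.differentiable (by simp)) t x _

namespace IsTestFunctionOn

variable {Ω : Set (ℝ × EuclideanSpace ℝ (Fin d))}

lemma deriv_fst (hφ : IsTestFunctionOn Ω (uncurry φ)) :
    IsTestFunctionOn Ω fun p => deriv (fun s => φ s p.2) p.1 := by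
  simp only [deriv_eq_fderiv_uncurry_apply (hφ.contDiff.differentiable (by simp))]
  exact hφ.fderiv_apply_const (1, 0)

lemma lap_snd (hφ : IsTestFunctionOn Ω (uncurry φ)) :
    IsTestFunctionOn Ω fun p => lap (φ p.1) p.2 := by
  simp only [lap_eq_sum_fderiv_uncurry hφ.contDiff]
  exact .sum _ fun i _ => (hφ.fderiv_apply_const _).fderiv_apply_const _

variable {μ : Measure (ℝ × EuclideanSpace ℝ (Fin d))}

lemma integrable_fderiv_snd (hφ : IsTestFunctionOn Ω (uncurry φ))
    {g : ℝ → EuclideanSpace ℝ (Fin d) → EuclideanSpace ℝ (Fin d)} (hg : Integrable (uncurry g) μ) :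
    Integrable (fun p => fderiv ℝ (φ p.1) p.2 (g p.1 p.2)) μ := by
  have hcont : Continuous (fderiv ℝ (uncurry φ)) := hφ.contDiff.continuous_fderiv (by simp)
  obtain ⟨C, hC⟩ := (hφ.hasCompactSupport.fderiv (𝕜 := ℝ)).exists_bound_of_continuous hcont
  simp only [fderiv_apply_eq_fderiv_uncurry_apply (hφ.contDiff.differentiable (by simp))]
  have happly : Continuous fun q : (ℝ × EuclideanSpace ℝ (Fin d) →L[ℝ] ℝ) ×
      EuclideanSpace ℝ (Fin d) => q.1 (0, q.2) := by fun_prop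
  refine (hg.norm.const_mul C).mono' (happly.comp_aestronglyMeasurable
    (hcont.aestronglyMeasurable.prodMk hg.aestronglyMeasurable)) (.of_forall fun p => ?_)
  refine (ContinuousLinearMap.le_of_opNorm_le _ (hC p) _).trans_eq ?_
  simp [Prod.norm_def, uncurry]

end IsTestFunctionOn

end SpaceTimeDerivatives

namespace IsCauchySolution

variable {d : ℕ} {T : ℝ} {f f₁ f₂ : EuclideanSpace ℝ (Fin d) → ℝ}
  {z w z₁ z₂ w₁ w₂ : ℝ → EuclideanSpace ℝ (Fin d) → ℝ}
  {g g₁ g₂ : ℝ → EuclideanSpace ℝ (Fin d) → EuclideanSpace ℝ (Fin d)}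

lemma integrable_weak (h : IsCauchySolution T f z w g) {φ : ℝ → EuclideanSpace ℝ (Fin d) → ℝ}
    (hφ : IsTestFunctionOn (Ioo 0 T ×ˢ univ) (uncurry φ)) :
    Integrable (fun p : ℝ × EuclideanSpace ℝ (Fin d) =>
      z p.1 p.2 * deriv (fun s => φ s p.2) p.1 + w p.1 p.2 * lap (φ p.1) p.2
        + fderiv ℝ (φ p.1) p.2 (g p.1 p.2)) (slabVolume T d) := by
  simp only [mul_comm (z _ _), mul_comm (w _ _)]
  exact ((hφ.deriv_fst.integrable_mul h.integrable_z).add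
    (hφ.lap_snd.integrable_mul h.integrable_w)).add (hφ.integrable_fderiv_snd h.integrable_g)

theorem sub (h₁ : IsCauchySolution T f₁ z₁ w₁ g₁) (h₂ : IsCauchySolution T f₂ z₂ w₂ g₂) :
    IsCauchySolution T (f₁ - f₂) (z₁ - z₂) (w₁ - w₂) (g₁ - g₂) where
  integrable_slice t ht := (h₁.integrable_slice t ht).sub (h₂.integrable_slice t ht)
  continuousOn ψ hψ hψb := by
    refine ((h₁.continuousOn ψ hψ hψb).sub (h₂.continuousOn ψ hψ hψb)).congr fun t ht => ?_
    obtain ⟨C, hC⟩ := hψb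
    have hmul {F : EuclideanSpace ℝ (Fin d) → ℝ} (hF : Integrable F) :
        Integrable fun x => F x * ψ x :=
      hF.mul_bdd (c := C) hψ.aestronglyMeasurable (.of_forall hC)
    simp only [Pi.sub_apply, sub_mul]
    exact integral_sub (hmul (h₁.integrable_slice t ht)) (hmul (h₂.integrable_slice t ht))
  initial := h₁.initial.sub h₂.initial
  integrable_z := h₁.integrable_z.sub h₂.integrable_z
  integrable_w := h₁.integrable_w.sub h₂.integrable_w
  integrable_g := h₁.integrable_g.sub h₂.integrable_g
  weak φ hφ := by
    have hi₁ := h₁.integrable_weak hφ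
    have hi₂ := h₂.integrable_weak hφ
    have hsub := integral_integral_sub hi₁ hi₂
    rw [h₁.weak φ hφ, h₂.weak φ hφ, sub_zero] at hsub
    refine Eq.trans ?_ hsub
    congr! 4
    simp only [Pi.sub_apply, map_sub]
    ring

end IsCauchySolution

/-! ### Bounded distributional solutions -/

section Representative

variable {X E : Type*} [TopologicalSpace X] [TopologicalSpace.MetrizableSpace X]
  [SecondCountableTopology X] [MeasurableSpace X] [OpensMeasurableSpace X] [NormedAddCommGroup E]
  [NormedSpace ℝ E] [FiniteDimensional ℝ E] [MeasurableSpace E] [BorelSpace E] {μ : Measure E}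
  [μ.IsAddHaarMeasure] {u : X → E → ℝ}

open ContinuousLinearMap (lsmul)
open scoped Convolution

lemma stronglyMeasurable_uncurry_convolution {ρ : E → ℝ} (hρ : Continuous ρ)
    (hρc : HasCompactSupport ρ) (hu : ∀ t, LocallyIntegrable (u t) μ)
    (hcont : ∀ ψ : E → ℝ, Continuous ψ → HasCompactSupport ψ →
      Continuous fun t => ∫ x, u t x * ψ x ∂μ) :
    StronglyMeasurable (uncurry fun t => ρ ⋆[lsmul ℝ ℝ, μ] u t) := by
  refine stronglyMeasurable_uncurry_of_continuous_of_stronglyMeasurable (fun x => ?_) fun t =>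
    (hρc.continuous_convolution_left (lsmul ℝ ℝ) hρ (hu t)).stronglyMeasurable
  simp only [convolution_eq_swap, ContinuousLinearMap.lsmul_apply, smul_eq_mul, mul_comm (ρ _)]
  exact hcont (fun y => ρ (x - y)) (by fun_prop) (hρc.comp_homeomorph (.subLeft x))

-- The representative is the pointwise limit of mollifications, which are jointly measurable.
lemma exists_stronglyMeasurable_uncurry_ae_eq (hu : ∀ t, LocallyIntegrable (u t) μ)
    (hcont : ∀ ψ : E → ℝ, Continuous ψ → HasCompactSupport ψ →
      Continuous fun t => ∫ x, u t x * ψ x ∂μ) :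
    ∃ v : X → E → ℝ, StronglyMeasurable (uncurry v) ∧ ∀ t, v t =ᵐ[μ] u t := by
  have hpos (n : ℕ) : (0 : ℝ) < 1 / (n + 1) := by positivity
  let bump (n : ℕ) : ContDiffBump (0 : E) :=
    ⟨1 / (n + 1), 2 * (1 / (n + 1)), hpos n, by linarith [hpos n]⟩
  let v (n : ℕ) (t : X) : E → ℝ := (bump n).normed μ ⋆[lsmul ℝ ℝ, μ] u t
  have hv (n : ℕ) : StronglyMeasurable (uncurry (v n)) :=
    stronglyMeasurable_uncurry_convolution (bump n).continuous_normed
      (bump n).hasCompactSupport_normed hu hcont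
  refine ⟨fun t x => limsup (fun n => v n t x) atTop,
    (Measurable.limsup fun n => (hv n).measurable).stronglyMeasurable, fun t => ?_⟩
  have hrOut : Tendsto (fun n => (bump n).rOut) atTop (𝓝 0) := by
    simpa only [mul_zero] using (tendsto_one_div_add_atTop_nhds_zero_nat (𝕜 := ℝ)).const_mul 2
  filter_upwards [ContDiffBump.ae_convolution_tendsto_right_of_locallyIntegrable (K := 2) hrOut
    (.of_forall fun n => le_rfl) (hu t)] with x hx
  exact hx.limsup_eq

end Representative

section DistSol

variable {d : ℕ} {T M γ : ℝ} {L : ℝ≥0} {β : ℝ → ℝ}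
  {b : EuclideanSpace ℝ (Fin d) → ℝ → EuclideanSpace ℝ (Fin d)}
  {u0 : EuclideanSpace ℝ (Fin d) → ℝ} {u v u₁ u₂ : ℝ → EuclideanSpace ℝ (Fin d) → ℝ}

lemma IsDistSol.exists_stronglyMeasurable_uncurry_ae_eq (hu : IsDistSol β b u0 u) :
    ∃ v : ℝ → EuclideanSpace ℝ (Fin d) → ℝ, StronglyMeasurable (uncurry v) ∧
      ∀ t, 0 ≤ t → v t =ᵐ[volume] u t := by
  obtain ⟨hint, hnarrow, -, -⟩ := hu
  have hmax (t : ℝ) : 0 ≤ max 0 t := le_max_left 0 t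
  obtain ⟨v, hv, hvu⟩ := _root_.exists_stronglyMeasurable_uncurry_ae_eq (μ := volume)
    (u := fun t => u (max 0 t)) (fun t => (hint _ (hmax t)).locallyIntegrable)
    fun ψ hψ hψc => ContinuousOn.comp_continuous (s := Ici 0) (f := max 0)
      (fun t ht => hnarrow ψ hψ (hψc.exists_bound_of_continuous hψ) t ht) (by fun_prop) hmax
  exact ⟨v, hv, fun t ht => by simpa only [max_eq_right ht] using hvu t⟩

lemma IsDistSol.congr (hu : IsDistSol β b u0 u) (hvu : ∀ t, 0 ≤ t → v t =ᵐ[volume] u t) :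
    IsDistSol β b u0 v := by
  obtain ⟨hint, hnarrow, hweak, hinitial⟩ := hu
  have hpair {ψ : EuclideanSpace ℝ (Fin d) → ℝ} {t : ℝ} (ht : 0 ≤ t) :
      ∫ x, u t x * ψ x = ∫ x, v t x * ψ x :=
    integral_congr_ae ((hvu t ht).mono fun x hx => by simp only [hx])
  refine ⟨fun t ht => (hint t ht).congr (hvu t ht).symm, fun ψ hψ hψb s hs => ?_,
    fun φ hφ hφc hφs => ?_, (hvu 0 le_rfl).trans hinitial⟩
  · rw [← hpair hs]
    exact (hnarrow ψ hψ hψb s hs).congr' (eventually_mem_nhdsWithin.mono fun t ht => hpair ht)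
  · refine Eq.trans (setIntegral_congr_fun measurableSet_Ioi fun t ht => ?_) (hweak φ hφ hφc hφs)
    exact integral_congr_ae ((hvu t (mem_Ioi.1 ht).le).mono fun x hx => by simp only [hx])

lemma BddL1.congr (hu : BddL1 T u) (hvu : ∀ t, 0 ≤ t → v t =ᵐ[volume] u t) : BddL1 T v := by
  obtain ⟨C, hC⟩ := hu
  refine ⟨C, fun t ht => (integral_congr_ae ?_).trans_le (hC t ht)⟩
  exact (hvu t ht.1.le).mono fun x hx => by simp only [hx]

lemma BddLinfty.congr (hu : BddLinfty T u) (hv : StronglyMeasurable (uncurry v))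
    (hvu : ∀ t, 0 ≤ t → v t =ᵐ[volume] u t) : BddLinfty T v := by
  obtain ⟨C, hC⟩ := hu
  refine ⟨C, (Measure.ae_prod_iff_ae_ae
    (measurableSet_le hv.measurable.abs measurable_const)).2 ?_⟩
  filter_upwards [Measure.ae_ae_of_ae_prod hC, ae_restrict_mem measurableSet_Ioo] with t ht htT
  filter_upwards [ht, hvu t htT.1.le] with x hx hvx
  rwa [uncurry_apply_pair, hvx]

lemma BddL1.integrable_uncurry (hu : BddL1 T u) (hmeas : StronglyMeasurable (uncurry u))
    (hint : ∀ t ∈ Ioo 0 T, Integrable (u t)) : Integrable (uncurry u) (slabVolume T d) := by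
  obtain ⟨C, hC⟩ := hu
  rw [integrable_prod_iff hmeas.aestronglyMeasurable]
  refine ⟨(ae_restrict_mem measurableSet_Ioo).mono hint, ?_⟩
  refine Measure.integrableOn_of_bounded (M := C) (by simp)
    hmeas.norm.integral_prod_right'.aestronglyMeasurable ?_
  filter_upwards [ae_restrict_mem measurableSet_Ioo] with t ht
  rw [Real.norm_of_nonneg (integral_nonneg fun x => norm_nonneg _)]
  exact hC t ht

lemma IsDistSol.setIntegral_Ioo_eq_zero (hu : IsDistSol β b u0 u)
    {φ : ℝ → EuclideanSpace ℝ (Fin d) → ℝ}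
    (hφ : IsTestFunctionOn (Ioo 0 T ×ˢ univ) (uncurry φ)) :
    ∫ t in Ioo 0 T, ∫ x, (u t x * deriv (fun s => φ s x) t + β (u t x) * lap (φ t) x
      + fderiv ℝ (φ t) x (u t x • b x (u t x))) = 0 := by
  simp only [map_smul, smul_eq_mul]
  refine Eq.trans ?_ (hu.2.2.1 φ hφ.contDiff hφ.hasCompactSupport
    fun p hp => (hφ.tsupport_subset hp).1.1)
  refine (setIntegral_eq_of_subset_of_forall_sdiff_eq_zero measurableSet_Ioi Ioo_subset_Ioi_self
    fun t ht => integral_eq_zero_of_ae (.of_forall fun x => ?_)).symm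
  have hout (y : EuclideanSpace ℝ (Fin d)) : (t, y) ∉ Ioo 0 T ×ˢ univ := fun h => ht.2 h.1
  have hzero : φ t = fun _ => 0 := funext fun y => hφ.apply_eq_zero (hout y)
  have hderiv : deriv (fun s => φ s x) t = 0 := hφ.deriv_fst.apply_eq_zero (hout x)
  simp [hderiv, hzero, lap_const]

lemma IsDistSol.isCauchySolution (hu : IsDistSol β b u0 u)
    (hmeas : StronglyMeasurable (uncurry u)) (hL1 : BddL1 T u)
    (hM : ∀ᵐ p ∂slabVolume T d, |u p.1 p.2| ≤ M) (hβ0 : β 0 = 0) (hβm : Measurable β)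
    (hβ : LipschitzOnWith L β (Icc (-M) M)) (hbm : Measurable (uncurry b))
    (hb : ∀ x, LipschitzOnWith L (fun r => r • b x r) (Icc (-M) M)) :
    IsCauchySolution T u0 u (fun t x => β (u t x)) fun t x => u t x • b x (u t x) := by
  have hint : Integrable (uncurry u) (slabVolume T d) := hL1.integrable_uncurry hmeas
    fun t ht => hu.1 t ht.1.le
  have hmem : ∀ᵐ p ∂slabVolume T d, u p.1 p.2 ∈ Icc (-M) M ∧ 0 ∈ Icc (-M) M :=
    hM.mono fun p hp => ⟨abs_le.1 hp, abs_le.1 (abs_zero.trans_le ((abs_nonneg _).trans hp))⟩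
  refine ⟨fun t ht => hu.1 t ht.1, fun ψ hψ hψb t ht => (hu.2.1 ψ hψ hψb t ht.1).mono_left
    (nhdsWithin_mono t Icc_subset_Ici_self), hu.2.2.2, hint, ?_, ?_,
    fun φ hφ => hu.setIntegral_Ioo_eq_zero hφ⟩
  · refine (hint.norm.const_mul L).mono' (hβm.comp hmeas.measurable).aestronglyMeasurable ?_
    filter_upwards [hmem] with p hp
    simpa [uncurry, hβ0] using hβ.norm_sub_le hp.1 hp.2
  · refine (hint.norm.const_mul L).mono' (hmeas.measurable.smul (hbm.comp
      (measurable_snd.prodMk hmeas.measurable))).aestronglyMeasurable ?_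
    filter_upwards [hmem] with p hp
    simpa [uncurry] using (hb p.2).norm_sub_le hp.1 hp.2

lemma memLp_two_of_integrable_of_ae_abs_le {α : Type*} [MeasurableSpace α] {μ : Measure α}
    {f : α → ℝ} {C : ℝ} (hf : Integrable f μ) (hC : ∀ᵐ a ∂μ, |f a| ≤ C) : MemLp f 2 μ := by
  rw [memLp_two_iff_integrable_sq hf.aestronglyMeasurable]
  simp only [sq]
  exact hf.mul_bdd hf.aestronglyMeasurable hC

lemma isCoerciveFlux_sub (hint₁ : Integrable (uncurry u₁) (slabVolume T d))
    (hint₂ : Integrable (uncurry u₂) (slabVolume T d))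
    (hM₁ : ∀ᵐ p ∂slabVolume T d, |u₁ p.1 p.2| ≤ M) (hM₂ : ∀ᵐ p ∂slabVolume T d, |u₂ p.1 p.2| ≤ M)
    (hmono : ∀ r₁ r₂ : ℝ, γ * (r₁ - r₂) ^ 2 ≤ (β r₁ - β r₂) * (r₁ - r₂))
    (hβ : LipschitzOnWith L β (Icc (-M) M))
    (hb : ∀ x, LipschitzOnWith L (fun r => r • b x r) (Icc (-M) M)) :
    IsCoerciveFlux T γ L (u₁ - u₂) ((fun t x => β (u₁ t x)) - fun t x => β (u₂ t x))
      ((fun t x => u₁ t x • b x (u₁ t x)) - fun t x => u₂ t x • b x (u₂ t x)) where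
  memLp_two := (memLp_two_of_integrable_of_ae_abs_le hint₁ hM₁).sub
    (memLp_two_of_integrable_of_ae_abs_le hint₂ hM₂)
  coercive := .of_forall fun p => (hmono _ _).trans_eq (mul_comm _ _)
  abs_le := by
    filter_upwards [hM₁, hM₂] with p hp₁ hp₂
    exact hβ.norm_sub_le (abs_le.1 hp₁) (abs_le.1 hp₂)
  norm_le := by
    filter_upwards [hM₁, hM₂] with p hp₁ hp₂
    exact (hb p.2).norm_sub_le (abs_le.1 hp₁) (abs_le.1 hp₂)

theorem IsDistSol.ae_eq_of_stronglyMeasurable (hT : 0 < T) (hγ : 0 < γ)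
    (hmono : ∀ r₁ r₂ : ℝ, γ * (r₁ - r₂) ^ 2 ≤ (β r₁ - β r₂) * (r₁ - r₂))
    (hβ0 : β 0 = 0) (hβ : LocallyLipschitz β) (hbm : Measurable (uncurry b))
    (hb : ∀ M, ∃ L : ℝ≥0, ∀ x, LipschitzOnWith L (fun r => r • b x r) (Icc (-M) M))
    (hsol₁ : IsDistSol β b u0 u₁) (hsol₂ : IsDistSol β b u0 u₂)
    (hmeas₁ : StronglyMeasurable (uncurry u₁)) (hmeas₂ : StronglyMeasurable (uncurry u₂))
    (hL1₁ : BddL1 T u₁) (hL1₂ : BddL1 T u₂) (hLinf₁ : BddLinfty T u₁) (hLinf₂ : BddLinfty T u₂)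
    {t : ℝ} (ht : t ∈ Icc 0 T) : u₁ t =ᵐ[volume] u₂ t := by
  obtain ⟨M₁, hM₁⟩ := hLinf₁
  obtain ⟨M₂, hM₂⟩ := hLinf₂
  set M := max M₁ M₂
  replace hM₁ : ∀ᵐ p ∂slabVolume T d, |u₁ p.1 p.2| ≤ M :=
    hM₁.mono fun p hp => hp.trans (le_max_left _ _)
  replace hM₂ : ∀ᵐ p ∂slabVolume T d, |u₂ p.1 p.2| ≤ M :=
    hM₂.mono fun p hp => hp.trans (le_max_right _ _)
  obtain ⟨Kβ, hKβ⟩ := LocallyLipschitzOn.exists_lipschitzOnWith_of_compact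
    (isCompact_Icc (a := -M) (b := M)) hβ.locallyLipschitzOn
  obtain ⟨Kb, hKb⟩ := hb M
  replace hKβ := hKβ.weaken (le_max_left Kβ Kb)
  replace hKb := fun x => (hKb x).weaken (le_max_right Kβ Kb)
  have hβm := hβ.continuous.measurable
  have hcauchy₁ := hsol₁.isCauchySolution hmeas₁ hL1₁ hM₁ hβ0 hβm hKβ hbm hKb
  have hcauchy₂ := hsol₂.isCauchySolution hmeas₂ hL1₂ hM₂ hβ0 hβm hKβ hbm hKb
  have hflux := isCoerciveFlux_sub hcauchy₁.integrable_z hcauchy₂.integrable_z hM₁ hM₂ hmono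
    hKβ hKb
  have hdiff := hcauchy₁.sub hcauchy₂
  rw [sub_self] at hdiff
  exact (hdiff.ae_eq_zero hT hγ hflux ht).mono fun x hx => sub_eq_zero.1 hx

end DistSol

lemma HypB.exists_lipschitzOnWith_smul {d : ℕ}
    {b : EuclideanSpace ℝ (Fin d) → ℝ → EuclideanSpace ℝ (Fin d)} (hb : HypB b) (M : ℝ) :
    ∃ L : ℝ≥0, ∀ x, LipschitzOnWith L (fun r => r • b x r) (Icc (-M) M) := by
  obtain ⟨hC1, ⟨Cb, hCb⟩, -, hderiv, -⟩ := hb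
  obtain ⟨C, hC⟩ := hderiv (|M| + 1) (by positivity)
  have hCb0 : 0 ≤ Cb := (norm_nonneg _).trans (hCb 0 0)
  have hC0 : 0 ≤ C := (norm_nonneg _).trans (hC 0 0 (by rw [abs_zero]; positivity))
  refine ⟨⟨Cb + (|M| + 1) * C, by positivity⟩, fun x => ?_⟩
  have hdiff : Differentiable ℝ (b x) :=
    (hC1.comp (contDiff_prodMk_right x)).differentiable (by simp)
  refine (convex_Icc (-M) M).lipschitzOnWith_of_nnnorm_deriv_le
    (fun r _ => differentiableAt_fun_id.smul (hdiff r)) fun r hr => ?_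
  have hrM : |r| ≤ |M| + 1 := (abs_le.2 hr).trans (by linarith [le_abs_self M])
  change ‖deriv (fun r => r • b x r) r‖ ≤ Cb + (|M| + 1) * C
  rw [deriv_fun_smul differentiableAt_fun_id (hdiff r), add_comm]
  simp only [deriv_id'', one_smul]
  refine (norm_add_le _ _).trans (add_le_add (hCb x r) ?_)
  rw [norm_smul]
  exact mul_le_mul hrM (hC x r hrM) (norm_nonneg _) (by positivity)

theorem fokker_planck_uniqueness_general {d : ℕ} {T : ℝ} (hT : 0 < T) {β : ℝ → ℝ} {γ : ℝ}
    (hγ : 0 < γ) (hmono : ∀ r₁ r₂ : ℝ, γ * (r₁ - r₂) ^ 2 ≤ (β r₁ - β r₂) * (r₁ - r₂))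
    (hβ0 : β 0 = 0) (hβ : LocallyLipschitz β)
    {b : EuclideanSpace ℝ (Fin d) → ℝ → EuclideanSpace ℝ (Fin d)} (hbm : Measurable (uncurry b))
    (hb : ∀ M, ∃ L : ℝ≥0, ∀ x, LipschitzOnWith L (fun r => r • b x r) (Icc (-M) M))
    {u0 : EuclideanSpace ℝ (Fin d) → ℝ} {u₁ u₂ : ℝ → EuclideanSpace ℝ (Fin d) → ℝ}
    (hsol₁ : IsDistSol β b u0 u₁) (hsol₂ : IsDistSol β b u0 u₂)
    (hL1₁ : BddL1 T u₁) (hL1₂ : BddL1 T u₂)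
    (hLinf₁ : BddLinfty T u₁) (hLinf₂ : BddLinfty T u₂) :
    ∀ t ∈ Icc (0 : ℝ) T, u₁ t =ᵐ[volume] u₂ t := by
  intro t ht
  obtain ⟨v₁, hv₁, hvu₁⟩ := hsol₁.exists_stronglyMeasurable_uncurry_ae_eq
  obtain ⟨v₂, hv₂, hvu₂⟩ := hsol₂.exists_stronglyMeasurable_uncurry_ae_eq
  have hv : v₁ t =ᵐ[volume] v₂ t :=
    IsDistSol.ae_eq_of_stronglyMeasurable hT hγ hmono hβ0 hβ hbm hb (hsol₁.congr hvu₁)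
      (hsol₂.congr hvu₂) hv₁ hv₂ (hL1₁.congr hvu₁) (hL1₂.congr hvu₂) (hLinf₁.congr hv₁ hvu₁)
      (hLinf₂.congr hv₂ hvu₂) ht
  exact (hvu₁ t ht.1).symm.trans (hv.trans (hvu₂ t ht.1))

/-- Theorem 2.1: uniqueness of bounded distributional solutions of the
nonlinear Fokker–Planck equation `∂_t u − Δβ(u) + div(b(x,u)u) = 0`, `u(0) = u0`. -/
theorem fokker_planck_uniqueness
    {d : ℕ} (hd : 1 ≤ d) (T : ℝ) (hT : 0 < T)
    (β : ℝ → ℝ) (γ0 : ℝ) (hβ : HypBeta β γ0)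
    (b : EuclideanSpace ℝ (Fin d) → ℝ → EuclideanSpace ℝ (Fin d)) (hb : HypB b)
    (u0 : EuclideanSpace ℝ (Fin d) → ℝ)
    (hu0L1 : Integrable u0) (hu0Linf : ∃ C, ∀ᵐ x, |u0 x| ≤ C)
    (u₁ u₂ : ℝ → EuclideanSpace ℝ (Fin d) → ℝ)
    (hsol₁ : IsDistSol β b u0 u₁) (hsol₂ : IsDistSol β b u0 u₂)
    (hL1₁ : BddL1 T u₁) (hL1₂ : BddL1 T u₂)
    (hLinf₁ : BddLinfty T u₁) (hLinf₂ : BddLinfty T u₂) :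
    ∀ t ∈ Icc (0 : ℝ) T, u₁ t =ᵐ[volume] u₂ t := by
  obtain ⟨hβ0, hβC1, hγ0, hmono⟩ := hβ
  exact fokker_planck_uniqueness_general hT hγ0 hmono hβ0 hβC1.locallyLipschitz
    hb.1.continuous.measurable hb.exists_lipschitzOnWith_smul hsol₁ hsol₂ hL1₁ hL1₂ hLinf₁ hLinf₂

end
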